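/- arXiv:2110.04023 — 2 statements merged into one kernel-verified Lean document; each statement's English description precedes it below -/
import Mathlib

section
/- If f ∈ BMO(ℝ^{d-1}, ℝ^m), then there exists a constant C > 0 independent of f such that the Poisson extension satisfies the seminorm bound |𝓗f|_𝐗 ≤ C‖f‖_{BMO(ℝ^{d-1})}. -/
/-!
The estimate sees `f` only through its oscillation, since the Poisson extension reproduces
constants: the gradient of `𝓗f` equals that of `w = 𝓗f - c = 𝓗(f - c)`, where `c` may be any mean
of `f`.

*Gradient part.* `∇P` is homogeneous, one degree lower than `P`, so `|∇P_t| ≤ C t⁻¹ P_t`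
(`pk_grad_bound`). Hence `t |∇𝓗f(x,t)|` is at most a constant times `∫ P_t(x - y) |f(y) - c| dy` with
`c` the mean over `B(x,t)`. The kernel is dominated by a sum over dyadic balls with geometrically
decaying weights, while the means over these balls drift only linearly in the index, so this
weighted oscillation is at most `C ‖f‖_BMO` (`weighted_sq`, `weighted_one`).

*Carleson part.* The `L²` version of the weighted oscillation rests on the `L²` John–Nirenberg
inequality (`john_nirenberg`). A Vitali covering by stopping balls shows that the best constant `K`
in the truncated mean square inequality satisfies `2K ≤ C b² + K`; truncation makes `K` finite, so
`K ≤ C b²` uniformly in the truncation (`jn_step`). Jensen's inequality for the probability density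
`P_t` and Tonelli's theorem turn this into a bound for `∫ |w(x,t)|² dx` over a ball, uniform in the
height `t` (`slice_bound`). Since `w` is harmonic, `Δ|w|² = 2|∇w|²`. Testing this with
`χ(x)(t - ε)(2r - t)`, where `χ` is a cutoff, moves all derivatives onto the weight: this bounds the
energy `∫ t |∇w|²` on the box by slice norms of `w`, up to boundary terms at the top and bottom that
are slice norms too (`green_bound`), and no boundary regularity of `𝓗f` is needed. Letting `ε → 0`
exhausts the Carleson box (`box_bound`, `carleson_bound`).
-/

/- Setting: upper half-space ℝ^d_+ modelled as pairs (x', x_d) ∈ ℝ^{d-1} × ℝ with x_d > 0,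
   target ℝ^m ⊇ N a smooth closed manifold. -/

open MeasureTheory Metric ENNReal

noncomputable section

namespace HarmonicMapsHalfSpace

/-- Horizontal slice ℝ^{d-1}. -/
abbrev E' (d : ℕ) := EuclideanSpace ℝ (Fin (d - 1))

/-- Target Euclidean space ℝ^m. -/
abbrev Fm (m : ℕ) := EuclideanSpace ℝ (Fin m)

/-- The open upper half-space ℝ^d_+. -/
def upperHalf (d : ℕ) : Set (E' d × ℝ) := {x | 0 < x.2}

/-- Normalizing constant `c_d` of the Poisson kernel, chosen so that `∫ P_t = 1`. -/
def cP (d : ℕ) : ℝ := (∫ y : E' d, ((‖y‖ ^ 2 + 1) ^ (-(d : ℝ) / 2)))⁻¹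

/-- The half-space Poisson kernel `P_t(x') = c_d t (|x'|² + t²)^{-d/2}`. -/
def poissonKernel (d : ℕ) (t : ℝ) (x' : E' d) : ℝ :=
  cP d * t * (‖x'‖ ^ 2 + t ^ 2) ^ (-(d : ℝ) / 2)

/-- Poisson extension `𝓗f` of a boundary datum `f : ℝ^{d-1} → ℝ^m`. -/
def poissonExt (d m : ℕ) (f : E' d → Fm m) (x : E' d × ℝ) : Fm m :=
  ∫ y' : E' d, poissonKernel d x.2 (x.1 - y') • f y'

/-- Euclidean norm of a point of ℝ^{d-1} × ℝ. -/
def eNorm (d : ℕ) (p : E' d × ℝ) : ℝ := Real.sqrt (‖p.1‖ ^ 2 + p.2 ^ 2)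

/-- Constant of the fundamental solution of `-Δ` in ℝ^d: `1/((d-2)·σ_{d-1})`
where `σ_{d-1} = d·ω_d` is the surface area of the unit sphere. -/
def greenConst (d : ℕ) : ℝ :=
  1 / (((d : ℝ) - 2) * ((d : ℝ) *
    (volume (Metric.ball (0 : EuclideanSpace ℝ (Fin d)) 1)).toReal))

/-- Green function of the Dirichlet Laplacian on the upper half-space (reflection formula). -/
def greenFn (d : ℕ) (x y : E' d × ℝ) : ℝ :=
  greenConst d * ((eNorm d (x.1 - y.1, x.2 - y.2)) ^ (2 - (d : ℝ)) -
    (eNorm d (x.1 - y.1, x.2 + y.2)) ^ (2 - (d : ℝ)))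

/-- Newtonian (Green) potential `𝓝F` on the upper half-space. -/
def newtonPot (d m : ℕ) (F : E' d × ℝ → Fm m) (x : E' d × ℝ) : Fm m :=
  ∫ y in upperHalf d, greenFn d x y • F y

/-- The Carleson box `B_{x_d}(x') × (0, x_d)`. -/
def carlesonBox (d : ℕ) (x : E' d × ℝ) : Set (E' d × ℝ) :=
  (Metric.ball x.1 x.2) ×ˢ (Set.Ioo 0 x.2)

/-- `L^∞` part of the `𝐗`-norm (as an extended real). -/
def supNorm (d m : ℕ) (u : E' d × ℝ → Fm m) : ℝ≥0∞ :=
  ⨆ (x : E' d × ℝ) (_ : 0 < x.2), ENNReal.ofReal ‖u x‖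

/-- Weighted gradient sup seminorm `sup_{x_d>0} x_d ‖∇u(·,x_d)‖_∞`. -/
def gradSupSemi (d m : ℕ) (u : E' d × ℝ → Fm m) : ℝ≥0∞ :=
  ⨆ (x : E' d × ℝ) (_ : 0 < x.2), ENNReal.ofReal (x.2 * ‖fderiv ℝ u x‖)

/-- Carleson measure seminorm
`sup_x ( x_d^{1-d} ∫_{B_{x_d}(x')}∫_0^{x_d} y_d |∇u|² )^{1/2}`. -/
def carlesonSemi (d m : ℕ) (u : E' d × ℝ → Fm m) : ℝ≥0∞ :=
  ⨆ (x : E' d × ℝ) (_ : 0 < x.2),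
    (ENNReal.ofReal (x.2 ^ (1 - (d : ℝ))) *
      ∫⁻ y in carlesonBox d x, ENNReal.ofReal (y.2 * ‖fderiv ℝ u y‖ ^ 2)) ^ (1 / 2 : ℝ)

/-- The seminorm `|u|_𝐗`. -/
def Xsemi (d m : ℕ) (u : E' d × ℝ → Fm m) : ℝ≥0∞ :=
  gradSupSemi d m u + carlesonSemi d m u

/-- The norm `‖u‖_𝐗 = ‖u‖_{L^∞(ℝ^d_+)} + |u|_𝐗`. -/
def Xnorm (d m : ℕ) (u : E' d × ℝ → Fm m) : ℝ≥0∞ :=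
  supNorm d m u + Xsemi d m u

/-- The norm of the source space `𝐘`. -/
def Ynorm (d m : ℕ) (F : E' d × ℝ → Fm m) : ℝ≥0∞ :=
  (⨆ (x : E' d × ℝ) (_ : 0 < x.2), ENNReal.ofReal (x.2 ^ 2 * ‖F x‖)) +
  ⨆ (x : E' d × ℝ) (_ : 0 < x.2),
    ENNReal.ofReal (x.2 ^ (1 - (d : ℝ))) *
      ∫⁻ y in carlesonBox d x, ENNReal.ofReal (y.2 * ‖F y‖)

/-- The `BMO(ℝ^{d-1})` seminorm. -/
def bmoSemi (d m : ℕ) (f : E' d → Fm m) : ℝ≥0∞ :=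
  ⨆ (z : E' d) (r : ℝ) (_ : 0 < r),
    (volume (Metric.ball z r))⁻¹ *
      ∫⁻ y in Metric.ball z r,
        ENNReal.ofReal ‖f y - ⨍ w in Metric.ball z r, f w‖

/-- The (extended) second fundamental form `Γ̃` obtained from a smooth extension `P`
of the nearest point projection onto `N`: `Γ̃(z)(v,w) = -Hess P(z)(v,w)`. -/
def sff (m : ℕ) (P : Fm m → Fm m) (z v w : Fm m) : Fm m :=
  -(fderiv ℝ (fderiv ℝ P) z v w)

/-- The nonlinearity `Γ(u)(∇u,∇u) = Σ_{i=1}^d Γ(u)(∂_i u, ∂_i u)`. -/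
def tension (d m : ℕ) (Γ : Fm m → Fm m → Fm m → Fm m) (u : E' d × ℝ → Fm m)
    (x : E' d × ℝ) : Fm m :=
  (∑ i : Fin (d - 1),
      Γ (u x) (fderiv ℝ u x (EuclideanSpace.single i 1, (0 : ℝ)))
        (fderiv ℝ u x (EuclideanSpace.single i 1, (0 : ℝ)))) +
    Γ (u x) (fderiv ℝ u x ((0 : E' d), (1 : ℝ)))
      (fderiv ℝ u x ((0 : E' d), (1 : ℝ)))

/-- `u` solves the Dirichlet problem for weakly harmonic maps with data `f`, in the
integral sense `u = 𝓗f + 𝓝(Γ(u)(∇u,∇u))` together with the constraint `u ∈ N` a.e. -/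
def IsSolution (d m : ℕ) (Γ : Fm m → Fm m → Fm m → Fm m) (N : Set (Fm m))
    (f : E' d → Fm m) (u : E' d × ℝ → Fm m) : Prop :=
  (∀ x : E' d × ℝ, 0 < x.2 →
    u x = poissonExt d m f x + newtonPot d m (tension d m Γ u) x) ∧
  (∀ᵐ x ∂(volume.restrict (upperHalf d)), u x ∈ N)

/-- Squared Euclidean length of the full gradient, `|∇u|² = Σ_{i=1}^d |∂_i u|²`. -/
def gradSq (d m : ℕ) (u : E' d × ℝ → Fm m) (x : E' d × ℝ) : ℝ :=
  (∑ i : Fin (d - 1), ‖fderiv ℝ u x (EuclideanSpace.single i 1, (0 : ℝ))‖ ^ 2) +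
    ‖fderiv ℝ u x ((0 : E' d), (1 : ℝ))‖ ^ 2

section

open Set Filter Topology
open scoped ContDiff

variable {d m : ℕ}

/-! ### Mean oscillation over balls -/

lemma vol_ball (z : E' d) {r : ℝ} (hr : 0 < r) :
    volume (ball z r) = ENNReal.ofReal (r ^ (d - 1)) * volume (ball (0 : E' d) 1) := by
  rw [Measure.addHaar_ball_of_pos _ _ hr, finrank_euclideanSpace_fin]

lemma vol_scale (z z' : E' d) {r a : ℝ} (hr : 0 < r) (ha : 0 < a) :
    volume (ball z (a * r)) = ENNReal.ofReal (a ^ (d - 1)) * volume (ball z' r) := by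
  rw [vol_ball z (mul_pos ha hr), vol_ball z' hr, mul_pow, ENNReal.ofReal_mul (by positivity),
    mul_assoc]

lemma vol_ball_pos (z : E' d) {r : ℝ} (hr : 0 < r) : volume (ball z r) ≠ 0 :=
  (measure_ball_pos _ _ hr).ne'

lemma vol_ball_fin (z : E' d) (r : ℝ) : volume (ball z r) ≠ ⊤ := measure_ball_lt_top.ne

lemma restrict_cB (z : E' d) {r : ℝ} (hr : 0 < r) :
    volume.restrict (closedBall z r) = volume.restrict (ball z r) := by
  apply Measure.restrict_congr_set
  refine (ae_eq_of_subset_of_measure_ge ball_subset_closedBall ?_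
    measurableSet_ball.nullMeasurableSet measure_closedBall_lt_top.ne).symm
  rw [Measure.addHaar_closedBall _ _ hr.le, Measure.addHaar_ball_of_pos _ _ hr]

lemma integrableOn_ball {f : E' d → Fm m} (hf : LocallyIntegrable f volume) (z : E' d) (r : ℝ) :
    IntegrableOn f (ball z r) :=
  (hf.integrableOn_isCompact (isCompact_closedBall z r)).mono_set ball_subset_closedBall

lemma avg_sub {f : E' d → Fm m} (hf : LocallyIntegrable f volume) (z : E' d) (r : ℝ)
    (c : Fm m) : ‖(⨍ w in ball z r, f w) - c‖ₑ * volume (ball z r) ≤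
      ∫⁻ y in ball z r, ‖f y - c‖ₑ := by
  have h1 : (volume.real (ball z r)) • ((⨍ w in ball z r, f w) - c)
      = ∫ y in ball z r, (f y - c) := by
    rw [smul_sub, measure_smul_setAverage _ (vol_ball_fin z r),
      integral_sub (integrableOn_ball hf z r) (integrableOn_const (vol_ball_fin z r)),
      setIntegral_const]
  have h2 := enorm_integral_le_lintegral_enorm (μ := volume.restrict (ball z r))
    (fun y => f y - c)
  rw [← h1, enorm_smul] at h2
  rw [mul_comm]
  convert h2 using 2
  rw [Real.enorm_eq_ofReal measureReal_nonneg, ofReal_measureReal (vol_ball_fin z r)]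

/-- The hypothesis `bmoSemi d m f ≤ b` in a division-free form. -/
def BmoLe (f : E' d → Fm m) (b : ℝ≥0∞) : Prop :=
  ∀ (z : E' d) (r : ℝ), 0 < r →
    ∫⁻ y in ball z r, ‖f y - ⨍ w in ball z r, f w‖ₑ ≤ b * volume (ball z r)

lemma bmoLe_of_bmoSemi {f : E' d → Fm m} {b : ℝ≥0∞} (h : bmoSemi d m f ≤ b) : BmoLe f b := by
  intro z r hr
  have h1 : (volume (ball z r))⁻¹ * ∫⁻ y in ball z r, ‖f y - ⨍ w in ball z r, f w‖ₑ ≤ b := by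
    refine le_trans ?_ h
    unfold bmoSemi
    simp only [ofReal_norm]
    exact le_iSup_of_le z (le_iSup_of_le r (le_iSup_of_le hr le_rfl))
  rw [mul_comm, ← div_eq_mul_inv] at h1
  exact (ENNReal.div_le_iff (vol_ball_pos z hr) (vol_ball_fin z r)).1 h1

/-- Means over nested comparable balls differ by a multiple of the `BMO` bound. -/
lemma avg_avg {f : E' d → Fm m} (hf : LocallyIntegrable f volume) {b : ℝ≥0∞} (hb : BmoLe f b)
    (z z' : E' d) {r a : ℝ} (hr : 0 < r) (ha : 0 < a) (hsub : ball z r ⊆ ball z' (a * r)) :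
    ‖(⨍ w in ball z r, f w) - ⨍ w in ball z' (a * r), f w‖ₑ ≤ ENNReal.ofReal (a ^ (d - 1)) * b := by
  have h1 := avg_sub hf z r (⨍ w in ball z' (a * r), f w)
  have h2 := (h1.trans (lintegral_mono_set hsub)).trans (hb z' (a * r) (mul_pos ha hr))
  rw [vol_scale z' z hr ha, ← mul_assoc, mul_comm b] at h2
  exact (ENNReal.mul_le_mul_iff_left (vol_ball_pos z hr) (vol_ball_fin z r)).1 h2

/-- The mean over `ball z r` also controls the oscillation on the dilated ball `ball z (a * r)`. -/
lemma lint_sub_le {f : E' d → Fm m} (hf : LocallyIntegrable f volume) {b : ℝ≥0∞} (hb : BmoLe f b)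
    (z : E' d) {r a : ℝ} (hr : 0 < r) (ha : 1 ≤ a) :
    ∫⁻ y in ball z (a * r), ‖f y - ⨍ w in ball z r, f w‖ₑ ≤
      ENNReal.ofReal (a ^ (d - 1) * (1 + a ^ (d - 1))) * b * volume (ball z r) := by
  have ha0 : 0 < a := by linarith
  have hsub : ball z r ⊆ ball z (a * r) := ball_subset_ball (by nlinarith)
  calc ∫⁻ y in ball z (a * r), ‖f y - ⨍ w in ball z r, f w‖ₑ
      ≤ ∫⁻ y in ball z (a * r), (‖f y - ⨍ w in ball z (a * r), f w‖ₑ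
          + ENNReal.ofReal (a ^ (d - 1)) * b) := by
        apply lintegral_mono
        intro y
        have h := avg_avg hf hb z z hr ha0 hsub
        rw [enorm_sub_rev] at h
        have h2 : f y - ⨍ w in ball z r, f w = (f y - ⨍ w in ball z (a * r), f w) +
          ((⨍ w in ball z (a * r), f w) - ⨍ w in ball z r, f w) := by abel
        simp only []
        rw [h2]
        exact (enorm_add_le _ _).trans (by gcongr)
    _ ≤ b * volume (ball z (a * r)) + ENNReal.ofReal (a ^ (d - 1)) * b * volume (ball z (a * r)) := by
        rw [lintegral_add_right _ measurable_const]
        gcongr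
        · exact hb z _ (by positivity)
        · simp
    _ = _ := by
        rw [vol_scale z z hr ha0, ENNReal.ofReal_mul (by positivity),
          ENNReal.ofReal_add (by positivity) (by positivity), ENNReal.ofReal_one]
        ring

/-! ### The John–Nirenberg inequality in `L²` -/

/-- The constant of `lint_sub_le` for dilation by `7`; all stopping balls centred in `ball z r`, and
their five-fold dilates up to radius `5 r`, stay inside `ball z (7 * r)`. -/
def cD (d : ℕ) : ℝ≥0∞ := ENNReal.ofReal ((7 : ℝ) ^ (d - 1) * (1 + (7 : ℝ) ^ (d - 1)))

/-- The constant relating the stopping height to the `BMO` bound; the factor `4 · 5^{d-1}` makes the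
five-fold enlarged stopping balls occupy at most a quarter of the volume. -/
def cA (d : ℕ) : ℝ≥0∞ := 4 * ENNReal.ofReal ((5 : ℝ) ^ (d - 1)) * cD d

lemma cD_le_cA : cD d ≤ cA d := by
  unfold cA
  have : (1 : ℝ≥0∞) ≤ 4 * ENNReal.ofReal ((5 : ℝ) ^ (d - 1)) := by
    have h : (1 : ℝ≥0∞) ≤ ENNReal.ofReal ((5 : ℝ) ^ (d - 1)) := by
      rw [← ENNReal.ofReal_one]
      exact ENNReal.ofReal_le_ofReal (one_le_pow₀ (by norm_num))
    calc (1 : ℝ≥0∞) = 1 * 1 := by simp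
      _ ≤ _ := mul_le_mul' (by norm_num) h
  calc cD d = 1 * cD d := by simp
    _ ≤ _ := by gcongr

/-- Lebesgue differentiation along the radii `r / 5 ^ k`: bounds on all these averages pass to almost
every point. -/
lemma ae_le_of_avg {f : E' d → Fm m} (hf : LocallyIntegrable f volume) (c : Fm m) {L : ℝ≥0∞}
    {r : ℝ} (hr : 0 < r) :
    ∀ᵐ x : E' d, (∀ k : ℕ, ∫⁻ y in ball x (r / 5 ^ k), ‖f y - c‖ₑ ≤ L * volume (ball x (r / 5 ^ k)))
      → ‖f x - c‖ₑ ≤ L := by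
  filter_upwards [IsUnifLocDoublingMeasure.ae_tendsto_average volume hf 1] with x hx hk
  have hlim : Tendsto (fun k : ℕ => r / 5 ^ k) atTop (𝓝[>] 0) := by
    rw [tendsto_nhdsWithin_iff]
    refine ⟨?_, Eventually.of_forall fun k => by simp only [mem_Ioi]; positivity⟩
    have := (tendsto_pow_atTop_nhds_zero_of_lt_one (r := (1 / 5 : ℝ)) (by norm_num)
      (by norm_num)).const_mul r
    simpa [div_eq_mul_inv] using this
  have h := hx (fun _ : ℕ => x) (fun k : ℕ => r / 5 ^ k) hlim
    (Eventually.of_forall fun k => by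
      apply mem_closedBall_self; positivity)
  have h2 : Tendsto (fun k : ℕ => ‖(⨍ y in closedBall x (r / 5 ^ k), f y) - c‖ₑ) atTop
      (𝓝 ‖f x - c‖ₑ) := (h.sub_const c).enorm
  refine le_of_tendsto' h2 fun k => ?_
  have hp : 0 < r / 5 ^ k := by positivity
  rw [restrict_cB x hp]
  exact (ENNReal.mul_le_mul_iff_left (vol_ball_pos x hp) (vol_ball_fin x _)).1
    ((avg_sub hf x _ c).trans (hk k))

/-- One step of the John–Nirenberg self-improvement: a Vitali covering by stopping balls at height
`cA d * b` improves any bound `K` on the truncated mean square oscillation to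
`(3 * (cA d * b) ^ 2 + K) / 2`. -/
lemma jn_step {f : E' d → Fm m} (hf : LocallyIntegrable f volume) {b : ℝ≥0∞} (hb : BmoLe f b)
    (hb0 : b ≠ 0) (hbt : b ≠ ⊤) (N K : ℝ≥0∞)
    (hK : ∀ (z : E' d) (r : ℝ), 0 < r →
      ∫⁻ y in ball z r, (min ‖f y - ⨍ w in ball z r, f w‖ₑ N) ^ 2 ≤ K * volume (ball z r))
    (z : E' d) {r : ℝ} (hr : 0 < r) :
    2 * ∫⁻ y in ball z r, (min ‖f y - ⨍ w in ball z r, f w‖ₑ N) ^ 2 ≤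
      (3 * (cA d * b) ^ 2 + K) * volume (ball z r) := by
  set c := ⨍ w in ball z r, f w with hc
  set L := cA d * b with hL
  have h7 : ∫⁻ y in ball z (7 * r), ‖f y - c‖ₑ ≤ cD d * b * volume (ball z r) :=
    lint_sub_le hf hb z hr (by norm_num)
  have hgood0 : ∀ x ∈ ball z r,
      ∫⁻ y in ball x (5 * r), ‖f y - c‖ₑ ≤ L * volume (ball x (5 * r)) := by
    intro x hx
    calc ∫⁻ y in ball x (5 * r), ‖f y - c‖ₑ ≤ ∫⁻ y in ball z (7 * r), ‖f y - c‖ₑ := by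
          apply lintegral_mono_set
          apply ball_subset_ball'
          have := mem_ball.1 hx
          linarith
      _ ≤ cD d * b * volume (ball z r) := h7
      _ ≤ L * volume (ball x (5 * r)) := by
          rw [hL]
          gcongr
          · exact cD_le_cA
          · apply ball_subset_ball'
            have := mem_ball'.1 hx
            linarith
  set S : Set (E' d) := {x | x ∈ ball z r ∧ ∃ k : ℕ,
    L * volume (ball x (r / 5 ^ k)) < ∫⁻ y in ball x (r / 5 ^ k), ‖f y - c‖ₑ} with hS
  -- the largest bad radius among `r / 5 ^ k`; its five-fold dilate is good
  have hradius : ∀ x ∈ S, ∃ s : ℝ, 0 < s ∧ s ≤ r ∧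
      L * volume (ball x s) < ∫⁻ y in ball x s, ‖f y - c‖ₑ ∧
      ∫⁻ y in ball x (5 * s), ‖f y - c‖ₑ ≤ L * volume (ball x (5 * s)) := by
    classical
    rintro x ⟨hxB, hx⟩
    refine ⟨r / 5 ^ (Nat.find hx), by positivity, ?_, Nat.find_spec hx, ?_⟩
    · exact div_le_self hr.le (one_le_pow₀ (by norm_num))
    · rcases Nat.eq_zero_or_pos (Nat.find hx) with h0 | h0
      · rw [h0, pow_zero, div_one]
        exact hgood0 x hxB
      · obtain ⟨j, hj⟩ := Nat.exists_eq_succ_of_ne_zero h0.ne'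
        have hmin := Nat.find_min hx (m := j) (by omega)
        rw [not_lt] at hmin
        rw [hj]
        have : 5 * (r / 5 ^ (j.succ)) = r / 5 ^ j := by
          rw [pow_succ]; field_simp
        rw [this]
        exact hmin
  choose! s hs0 hsr hsbad hsgood using hradius
  obtain ⟨u, huS, hudisj, hucov⟩ := Vitali.exists_disjoint_subfamily_covering_enlargement_closedBall
    S (fun x => x) s r hsr 5 (by norm_num)
  have hucount : u.Countable := by
    apply hudisj.countable_of_nonempty_interior
    intro a ha
    exact ⟨a, ball_subset_interior_closedBall (mem_ball_self (hs0 a (huS ha)))⟩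
  have : Countable u := hucount.to_subtype
  -- total measure of the stopping balls
  have hV1 : L * ∑' a : u, volume (ball (a : E' d) (s a)) ≤ cD d * b * volume (ball z r) := by
    rw [← ENNReal.tsum_mul_left]
    calc ∑' a : u, L * volume (ball (a : E' d) (s a))
        ≤ ∑' a : u, ∫⁻ y in ball (a : E' d) (s a), ‖f y - c‖ₑ :=
          ENNReal.tsum_le_tsum fun a => (hsbad a (huS a.2)).le
      _ = ∫⁻ y in ⋃ a : u, ball (a : E' d) (s a), ‖f y - c‖ₑ := by
          rw [lintegral_iUnion (fun a => measurableSet_ball)]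
          intro a a' haa
          exact (hudisj a.2 a'.2 (fun h => haa (Subtype.ext h))).mono ball_subset_closedBall
            ball_subset_closedBall
      _ ≤ ∫⁻ y in ball z (7 * r), ‖f y - c‖ₑ := by
          apply lintegral_mono_set
          apply iUnion_subset
          intro a
          apply ball_subset_ball'
          have h1 := mem_ball.1 (huS a.2).1
          have h2 := hsr a (huS a.2)
          linarith
      _ ≤ _ := h7
  set V := ∑' a : u, volume (ball (a : E' d) (s a)) with hVdef
  have hD0 : cD d ≠ 0 := by
    unfold cD; simp only [ne_eq, ENNReal.ofReal_eq_zero, not_le]; positivity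
  have hDt : cD d ≠ ⊤ := ENNReal.ofReal_ne_top
  have hV : 4 * ENNReal.ofReal ((5 : ℝ) ^ (d - 1)) * V ≤ volume (ball z r) := by
    have h1 : (cD d * b) * (4 * ENNReal.ofReal ((5 : ℝ) ^ (d - 1)) * V) ≤
        (cD d * b) * volume (ball z r) := by
      refine le_trans (le_of_eq ?_) hV1
      rw [hL, cA]; ring
    exact (ENNReal.mul_le_mul_iff_right (mul_ne_zero hD0 hb0) (ENNReal.mul_ne_top hDt hbt)).1 h1
  -- integral over each enlarged ball
  have hball : ∀ a : u, ∫⁻ y in ball (a : E' d) (5 * s a), (min ‖f y - c‖ₑ N) ^ 2 ≤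
      (2 * K + 2 * L ^ 2) * (ENNReal.ofReal ((5 : ℝ) ^ (d - 1)) * volume (ball (a : E' d) (s a))) := by
    intro a
    have hsa := hs0 a (huS a.2)
    have h5 : 0 < 5 * s a := by positivity
    have hdiff : ‖(⨍ w in ball (a : E' d) (5 * s a), f w) - c‖ₑ ≤ L :=
      (ENNReal.mul_le_mul_iff_left (vol_ball_pos (a : E' d) h5) (vol_ball_fin _ _)).1
        ((avg_sub hf (a : E' d) _ c).trans (hsgood a (huS a.2)))
    rw [← vol_scale (a : E' d) a hsa (by norm_num)]
    calc ∫⁻ y in ball (a : E' d) (5 * s a), (min ‖f y - c‖ₑ N) ^ 2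
        ≤ ∫⁻ y in ball (a : E' d) (5 * s a),
          (2 * (min ‖f y - ⨍ w in ball (a : E' d) (5 * s a), f w‖ₑ N) ^ 2 + 2 * L ^ 2) := by
          apply lintegral_mono
          intro y
          simp only []
          have h1 : ‖f y - c‖ₑ ≤ ‖f y - ⨍ w in ball (a : E' d) (5 * s a), f w‖ₑ + L := by
            have h2 : f y - c = (f y - ⨍ w in ball (a : E' d) (5 * s a), f w) +
              ((⨍ w in ball (a : E' d) (5 * s a), f w) - c) := by abel
            rw [h2]
            exact (enorm_add_le _ _).trans (by gcongr)
          have h3 : min ‖f y - c‖ₑ N ≤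
              min ‖f y - ⨍ w in ball (a : E' d) (5 * s a), f w‖ₑ N + L := by
            rcases le_total ‖f y - ⨍ w in ball (a : E' d) (5 * s a), f w‖ₑ N with h | h
            · rw [min_eq_left h]; exact (min_le_left _ _).trans h1
            · rw [min_eq_right h]; exact (min_le_right _ _).trans le_self_add
          refine (pow_le_pow_left' h3 2).trans ?_
          have := ENNReal.rpow_add_le_mul_rpow_add_rpow
            (min ‖f y - ⨍ w in ball (a : E' d) (5 * s a), f w‖ₑ N) L (p := 2) (by norm_num)
          norm_num at this
          rw [mul_add] at this
          exact_mod_cast this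
      _ ≤ 2 * (K * volume (ball (a : E' d) (5 * s a))) + 2 * L ^ 2 * volume (ball (a : E' d) (5 * s a)) := by
          rw [lintegral_add_right _ measurable_const, lintegral_const_mul' _ _ (by norm_num)]
          gcongr
          · exact hK _ _ h5
          · simp
      _ = _ := by ring
  set U : Set (E' d) := ⋃ a : u, ball (a : E' d) (5 * s a) with hU
  have hUm : MeasurableSet U := MeasurableSet.iUnion fun a => measurableSet_ball
  have hUint : ∫⁻ y in U, (min ‖f y - c‖ₑ N) ^ 2 ≤
      (2 * K + 2 * L ^ 2) * (ENNReal.ofReal ((5 : ℝ) ^ (d - 1)) * V) := by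
    calc ∫⁻ y in U, (min ‖f y - c‖ₑ N) ^ 2
        ≤ ∑' a : u, ∫⁻ y in ball (a : E' d) (5 * s a), (min ‖f y - c‖ₑ N) ^ 2 :=
          lintegral_iUnion_le _ _
      _ ≤ _ := by
          rw [hVdef, ← ENNReal.tsum_mul_left, ← ENNReal.tsum_mul_left]
          exact ENNReal.tsum_le_tsum hball
  have hcU : ∀ᵐ x ∂(volume : Measure (E' d)), x ∈ ⋃ a : u, closedBall (a : E' d) (5 * s a) → x ∈ U := by
    have h1 : ∀ a : u, ∀ᵐ x ∂(volume : Measure (E' d)), x ∈ closedBall (a : E' d) (5 * s a) →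
        x ∈ ball (a : E' d) (5 * s a) := by
      intro a
      have hsa := hs0 a (huS a.2)
      have h5 : 0 < 5 * s a := by positivity
      rw [← ae_restrict_iff' measurableSet_closedBall, restrict_cB _ h5]
      exact ae_restrict_mem measurableSet_ball
    filter_upwards [ae_all_iff.2 h1] with x hx hxm
    obtain ⟨a, ha⟩ := mem_iUnion.1 hxm
    exact mem_iUnion.2 ⟨a, hx a ha⟩
  have hmain : ∫⁻ y in ball z r, (min ‖f y - c‖ₑ N) ^ 2 ≤
      L ^ 2 * volume (ball z r) + ∫⁻ y in U, (min ‖f y - c‖ₑ N) ^ 2 := by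
    rw [← lintegral_indicator hUm]
    calc ∫⁻ y in ball z r, (min ‖f y - c‖ₑ N) ^ 2
        ≤ ∫⁻ y in ball z r, (L ^ 2 + U.indicator (fun y => (min ‖f y - c‖ₑ N) ^ 2) y) := by
          apply lintegral_mono_ae
          filter_upwards [ae_restrict_mem measurableSet_ball,
            ae_restrict_of_ae (ae_le_of_avg hf c (L := L) hr), ae_restrict_of_ae hcU] with y hyB hy1 hy2
          by_cases hyU : y ∈ U
          · rw [indicator_of_mem hyU]; exact le_add_self
          · refine le_trans ?_ le_self_add
            have hyS : y ∉ S := by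
              intro hyS
              obtain ⟨a, hau, ha⟩ := hucov y hyS
              exact hyU (hy2 (mem_iUnion.2 ⟨⟨a, hau⟩, ha (mem_closedBall_self (hs0 y hyS).le)⟩))
            have : ∀ k : ℕ, ∫⁻ w in ball y (r / 5 ^ k), ‖f w - c‖ₑ ≤ L * volume (ball y (r / 5 ^ k)) := by
              intro k
              by_contra hk
              exact hyS ⟨hyB, k, not_le.1 hk⟩
            exact pow_le_pow_left' ((min_le_left _ _).trans (hy1 this)) 2
      _ = L ^ 2 * volume (ball z r) + ∫⁻ y in ball z r, U.indicator (fun y => (min ‖f y - c‖ₑ N) ^ 2) y := by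
          rw [lintegral_add_left measurable_const]; simp
      _ ≤ _ := by
          gcongr
          exact Measure.restrict_le_self
  calc 2 * ∫⁻ y in ball z r, (min ‖f y - c‖ₑ N) ^ 2
      ≤ 2 * (L ^ 2 * volume (ball z r) + (2 * K + 2 * L ^ 2) * (ENNReal.ofReal ((5 : ℝ) ^ (d - 1)) * V)) := by
        gcongr; exact hmain.trans (by gcongr)
    _ = 2 * (L ^ 2 * volume (ball z r)) + (K + L ^ 2) * (4 * ENNReal.ofReal ((5 : ℝ) ^ (d - 1)) * V) := by ring
    _ ≤ 2 * (L ^ 2 * volume (ball z r)) + (K + L ^ 2) * volume (ball z r) := by gcongr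
    _ = _ := by ring

/-- John–Nirenberg in `L²` form: the mean square oscillation is bounded by the square of the
mean oscillation bound. -/
lemma john_nirenberg {f : E' d → Fm m} (hf : LocallyIntegrable f volume) {b : ℝ≥0∞}
    (hb : BmoLe f b) (hb0 : b ≠ 0) (hbt : b ≠ ⊤) (z : E' d) {r : ℝ} (hr : 0 < r) :
    ∫⁻ y in ball z r, ‖f y - ⨍ w in ball z r, f w‖ₑ ^ 2 ≤
      3 * (cA d * b) ^ 2 * volume (ball z r) := by
  have htrunc : ∀ N : ℕ, ∀ (z : E' d) (r : ℝ), 0 < r →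
      ∫⁻ y in ball z r, (min ‖f y - ⨍ w in ball z r, f w‖ₑ N) ^ 2 ≤
      3 * (cA d * b) ^ 2 * volume (ball z r) := by
    intro N
    set K : ℝ≥0∞ := ⨆ (z : E' d) (r : ℝ) (_ : 0 < r),
      (∫⁻ y in ball z r, (min ‖f y - ⨍ w in ball z r, f w‖ₑ N) ^ 2) / volume (ball z r) with hK
    have hKle : ∀ (z : E' d) (r : ℝ), 0 < r →
        ∫⁻ y in ball z r, (min ‖f y - ⨍ w in ball z r, f w‖ₑ N) ^ 2 ≤ K * volume (ball z r) := by
      intro z r hr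
      rw [← ENNReal.div_le_iff (vol_ball_pos z hr) (vol_ball_fin z r)]
      exact le_iSup_of_le z (le_iSup_of_le r (le_iSup_of_le hr le_rfl))
    have hKt : K ≠ ⊤ := by
      have : K ≤ (N : ℝ≥0∞) ^ 2 := by
        refine iSup_le fun z => iSup_le fun r => iSup_le fun hr => ?_
        rw [ENNReal.div_le_iff (vol_ball_pos z hr) (vol_ball_fin z r)]
        calc _ ≤ ∫⁻ y in ball z r, (N : ℝ≥0∞) ^ 2 := by
              apply lintegral_mono
              intro y
              exact pow_le_pow_left' (min_le_right _ _) 2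
          _ = _ := by simp
      exact ne_top_of_le_ne_top (by simp) this
    have hK2 : 2 * K ≤ 3 * (cA d * b) ^ 2 + K := by
      rw [hK, ENNReal.mul_iSup]
      refine iSup_le fun z => ?_
      rw [ENNReal.mul_iSup]
      refine iSup_le fun r => ?_
      rw [ENNReal.mul_iSup]
      refine iSup_le fun hr => ?_
      rw [← mul_div_assoc, ENNReal.div_le_iff (vol_ball_pos z hr) (vol_ball_fin z r)]
      exact jn_step hf hb hb0 hbt N K hKle z hr
    rw [two_mul] at hK2
    have hK3 : K ≤ 3 * (cA d * b) ^ 2 := (ENNReal.add_le_add_iff_right hKt).1 hK2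
    intro z r hr
    exact (hKle z r hr).trans (by gcongr)
  have hsup : ∀ y, ‖f y - ⨍ w in ball z r, f w‖ₑ ^ 2 =
      ⨆ N : ℕ, (min ‖f y - ⨍ w in ball z r, f w‖ₑ N) ^ 2 := by
    intro y
    apply le_antisymm
    · obtain ⟨N, hN⟩ := ENNReal.exists_nat_gt (r := ‖f y - ⨍ w in ball z r, f w‖ₑ) (by simp)
      refine le_iSup_of_le N ?_
      rw [min_eq_left hN.le]
    · exact iSup_le fun N => pow_le_pow_left' (min_le_left _ _) 2
  simp_rw [hsup]
  rw [lintegral_iSup']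
  · exact iSup_le fun N => htrunc N z r hr
  · intro N
    have := (hf.aestronglyMeasurable.restrict (s := ball z r)).sub
      (aestronglyMeasurable_const (b := ⨍ w in ball z r, f w))
    exact (this.enorm.min aemeasurable_const).pow_const 2
  · refine Eventually.of_forall fun y N N' h => ?_
    exact pow_le_pow_left' (min_le_min_left _ (by exact_mod_cast h)) 2

/-! ### The Poisson kernel and weighted oscillation -/

lemma bracket_integrable (hd : 2 < d) :
    Integrable (fun y : E' d => (‖y‖ ^ 2 + 1) ^ (-(d : ℝ) / 2)) := by
  have h := integrable_rpow_neg_one_add_norm_sq (E := E' d) (μ := volume) (r := d) (by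
    rw [finrank_euclideanSpace_fin]
    exact_mod_cast (by omega : d - 1 < d))
  simpa only [add_comm] using h

lemma cP_pos (hd : 2 < d) : 0 < cP d := by
  unfold cP
  rw [inv_pos, integral_pos_iff_support_of_nonneg (fun y => by positivity) (bracket_integrable hd)]
  have : (Function.support fun y : E' d => (‖y‖ ^ 2 + 1) ^ (-(d : ℝ) / 2)) = univ := by
    ext y
    simp only [Function.mem_support, mem_univ, iff_true]
    positivity
  rw [this, Measure.measure_univ_pos]
  exact NeZero.ne _

lemma pk_nonneg (hd : 2 < d) {t : ℝ} (ht : 0 < t) (z : E' d) : 0 ≤ poissonKernel d t z := by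
  have := cP_pos hd
  unfold poissonKernel; positivity

lemma pk_scale {t : ℝ} (hd : 2 < d) (ht : 0 < t) (z : E' d) : poissonKernel d t z =
    (t ^ (d - 1))⁻¹ * (cP d * (‖t⁻¹ • z‖ ^ 2 + 1) ^ (-(d : ℝ) / 2)) := by
  unfold poissonKernel
  have h1 : ‖z‖ ^ 2 + t ^ 2 = t ^ 2 * (‖t⁻¹ • z‖ ^ 2 + 1) := by
    rw [norm_smul, Real.norm_of_nonneg (by positivity)]; field_simp
  have h2 : (t ^ 2) ^ (-(d : ℝ) / 2) = (t ^ d)⁻¹ := by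
    rw [← Real.rpow_natCast t 2, ← Real.rpow_mul ht.le, ← Real.rpow_natCast t d,
      ← Real.rpow_neg ht.le]
    congr 1; push_cast; ring
  rw [h1, Real.mul_rpow (by positivity) (by positivity), h2]
  have h3 : t ^ d = t ^ (d - 1) * t := by rw [← pow_succ]; congr 1; omega
  rw [h3]; field_simp

lemma pk_integrable (hd : 2 < d) {t : ℝ} (ht : 0 < t) (x : E' d) :
    Integrable (fun y : E' d => poissonKernel d t (x - y)) := by
  apply Integrable.comp_sub_left (f := fun z => poissonKernel d t z)
  simp_rw [pk_scale hd ht]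
  apply Integrable.const_mul
  apply Integrable.const_mul
  exact (bracket_integrable hd).comp_smul (inv_ne_zero ht.ne')

lemma pk_integral (hd : 2 < d) {t : ℝ} (ht : 0 < t) (x : E' d) :
    ∫ y : E' d, poissonKernel d t (x - y) = 1 := by
  rw [integral_sub_left_eq_self (fun z => poissonKernel d t z)]
  simp_rw [pk_scale hd ht]
  rw [integral_const_mul, integral_const_mul,
    Measure.integral_comp_smul volume (fun w : E' d => (‖w‖ ^ 2 + 1) ^ (-(d : ℝ) / 2)) t⁻¹]
  rw [finrank_euclideanSpace_fin, inv_pow, inv_inv, abs_of_pos (by positivity), smul_eq_mul]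
  have h := cP_pos hd
  have h2 : ∫ y : E' d, (‖y‖ ^ 2 + 1) ^ (-(d : ℝ) / 2) = (cP d)⁻¹ := by
    unfold cP; rw [inv_inv]
  rw [h2]; field_simp

lemma pk_lintegral (hd : 2 < d) {t : ℝ} (ht : 0 < t) (x : E' d) :
    ∫⁻ y : E' d, ENNReal.ofReal (poissonKernel d t (x - y)) = 1 := by
  rw [← ofReal_integral_eq_lintegral_ofReal (pk_integrable hd ht x)
    (Eventually.of_forall fun y => pk_nonneg hd ht _), pk_integral hd ht, ENNReal.ofReal_one]

lemma pk_continuous (t : ℝ) (ht : 0 < t) : Continuous (fun z : E' d => poissonKernel d t z) := by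
  unfold poissonKernel
  refine continuous_const.mul (Continuous.rpow_const (by fun_prop) fun z => Or.inl (by positivity))

lemma rpow_le_inv_pow {s ρ : ℝ} (hρ : 0 < ρ) (h : ρ ^ 2 ≤ s) :
    s ^ (-(d : ℝ) / 2) ≤ (ρ ^ d)⁻¹ := by
  have h2 : (ρ ^ 2) ^ (-(d : ℝ) / 2) = (ρ ^ d)⁻¹ := by
    rw [← Real.rpow_natCast ρ 2, ← Real.rpow_mul hρ.le, ← Real.rpow_natCast ρ d,
      ← Real.rpow_neg hρ.le]
    congr 1; push_cast; ring
  rw [← h2]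
  apply Real.rpow_le_rpow_of_nonpos (by positivity) h
  have : (0 : ℝ) ≤ d := by positivity
  linarith

lemma pk_le (hd : 2 < d) {t ρ : ℝ} (ht : 0 < t) (hρ : 0 < ρ) {z : E' d}
    (h : ρ ≤ ‖z‖ ∨ ρ ≤ t) : poissonKernel d t z ≤ cP d * t * (ρ ^ d)⁻¹ := by
  have := cP_pos hd
  unfold poissonKernel
  gcongr
  apply rpow_le_inv_pow hρ
  rcases h with h | h
  · have := pow_le_pow_left₀ hρ.le h 2
    nlinarith [sq_nonneg t]
  · have := pow_le_pow_left₀ hρ.le h 2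
    nlinarith [sq_nonneg ‖z‖]

/-- The Poisson kernel is dominated by a sum of dyadic ball indicators. -/
lemma pk_dyadic (hd : 2 < d) {r : ℝ} (hr : 0 < r) (z y : E' d) :
    ENNReal.ofReal (poissonKernel d r (z - y)) ≤ ∑' k : ℕ,
      (ball z (2 ^ k * r)).indicator
        (fun _ => ENNReal.ofReal (cP d * r * ((2 ^ k * r / 2) ^ d)⁻¹)) y := by
  classical
  have hex : ∃ k : ℕ, y ∈ ball z (2 ^ k * r) := by
    obtain ⟨k, hk⟩ := pow_unbounded_of_one_lt (dist y z / r) (by norm_num : (1 : ℝ) < 2)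
    exact ⟨k, mem_ball.2 ((div_lt_iff₀ hr).1 hk)⟩
  refine le_trans ?_ (ENNReal.le_tsum (Nat.find hex))
  rw [indicator_of_mem (Nat.find_spec hex)]
  apply ENNReal.ofReal_le_ofReal
  apply pk_le hd hr (by positivity)
  rcases Nat.eq_zero_or_pos (Nat.find hex) with h0 | h0
  · right; rw [h0]; linarith
  · left
    obtain ⟨j, hj⟩ := Nat.exists_eq_succ_of_ne_zero h0.ne'
    have hmin := Nat.find_min hex (m := j) (by omega)
    rw [mem_ball, not_lt, dist_comm, dist_eq_norm] at hmin
    rw [hj, pow_succ]; linarith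

/-- Means over dyadic dilates of a ball drift at most linearly in the number of dilations. -/
lemma avg_dyadic {f : E' d → Fm m} (hf : LocallyIntegrable f volume) {b : ℝ≥0∞} (hb : BmoLe f b)
    (z : E' d) {r : ℝ} (hr : 0 < r) (k : ℕ) :
    ‖(⨍ w in ball z r, f w) - ⨍ w in ball z (2 ^ k * r), f w‖ₑ ≤
      k * (ENNReal.ofReal ((2 : ℝ) ^ (d - 1)) * b) := by
  induction k with
  | zero => simp
  | succ k ih =>
    have h2 := avg_avg hf hb z z (r := 2 ^ k * r) (a := 2) (by positivity) (by norm_num)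
      (ball_subset_ball (by have : 0 < 2 ^ k * r := by positivity
                            linarith))
    have e : (2 : ℝ) ^ (k + 1) * r = 2 * (2 ^ k * r) := by ring
    rw [e]
    calc _ = ‖((⨍ w in ball z r, f w) - ⨍ w in ball z (2 ^ k * r), f w) +
        ((⨍ w in ball z (2 ^ k * r), f w) - ⨍ w in ball z (2 * (2 ^ k * r)), f w)‖ₑ := by
          congr 1; abel
      _ ≤ _ := enorm_add_le _ _
      _ ≤ k * (ENNReal.ofReal ((2 : ℝ) ^ (d - 1)) * b) + ENNReal.ofReal ((2 : ℝ) ^ (d - 1)) * b :=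
          add_le_add ih h2
      _ = _ := by push_cast; ring

lemma sq_add_le (a b : ℝ≥0∞) : (a + b) ^ 2 ≤ 2 * a ^ 2 + 2 * b ^ 2 := by
  have := ENNReal.rpow_add_le_mul_rpow_add_rpow a b (p := 2) (by norm_num)
  norm_num at this
  rw [mul_add] at this
  exact_mod_cast this

lemma dyadic_sum_ne_top :
    ∑' k : ℕ, ENNReal.ofReal ((1 / 2 : ℝ) ^ k * (1 + (k : ℝ) ^ 2)) ≠ ⊤ := by
  have h : Summable fun k : ℕ => ((1 / 2 : ℝ) ^ k * (1 + (k : ℝ) ^ 2)) := by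
    have h1 := summable_geometric_of_lt_one (r := (1 / 2 : ℝ)) (by norm_num) (by norm_num)
    have h2 := summable_pow_mul_geometric_of_norm_lt_one 2 (r := (1 / 2 : ℝ)) (by norm_num)
    refine (h1.add h2).congr fun k => by ring
  exact h.tsum_ofReal_ne_top

/-- Weighted `L²` oscillation: the Poisson average of `|f - f_{B(z,r)}|²` at `(z, r)` is bounded by
the square of the `BMO` bound. -/
lemma weighted_sq (hd : 2 < d) : ∃ C : ℝ, 0 < C ∧ ∀ (m : ℕ) (f : E' d → Fm m) (B : ℝ), 0 < B →
    LocallyIntegrable f volume → BmoLe f (ENNReal.ofReal B) → ∀ (z : E' d) (r : ℝ), 0 < r →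
    ∫⁻ y, ENNReal.ofReal (poissonKernel d r (z - y)) * ‖f y - ⨍ w in ball z r, f w‖ₑ ^ 2 ≤
      ENNReal.ofReal (C * B ^ 2) := by
  set M : ℝ≥0∞ := 6 * cA d ^ 2 + 2 * ENNReal.ofReal ((2 : ℝ) ^ (d - 1)) ^ 2 with hM
  set Ct : ℝ≥0∞ := ENNReal.ofReal (cP d * 2 ^ d) * volume (ball (0 : E' d) 1) * M *
    ∑' k : ℕ, ENNReal.ofReal ((1 / 2 : ℝ) ^ k * (1 + (k : ℝ) ^ 2)) with hCt
  have hAt : cA d ≠ ⊤ := by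
    unfold cA cD
    exact ENNReal.mul_ne_top (ENNReal.mul_ne_top (by norm_num) ENNReal.ofReal_ne_top)
      ENNReal.ofReal_ne_top
  have hMt : M ≠ ⊤ := by
    rw [hM]
    exact ENNReal.add_ne_top.2 ⟨ENNReal.mul_ne_top (by norm_num) (ENNReal.pow_ne_top hAt),
      ENNReal.mul_ne_top (by norm_num) (ENNReal.pow_ne_top ENNReal.ofReal_ne_top)⟩
  have hCtt : Ct ≠ ⊤ := ENNReal.mul_ne_top (ENNReal.mul_ne_top (ENNReal.mul_ne_top
    ENNReal.ofReal_ne_top (vol_ball_fin _ _)) hMt) dyadic_sum_ne_top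
  refine ⟨Ct.toReal + 1, by positivity, ?_⟩
  intro m f B hB hf hb z r hr
  set b := ENNReal.ofReal B with hbdef
  have hb0 : b ≠ 0 := by simpa [hbdef] using hB
  have hbt : b ≠ ⊤ := ENNReal.ofReal_ne_top
  set c := ⨍ w in ball z r, f w with hc
  have hball : ∀ k : ℕ, ∫⁻ y in ball z (2 ^ k * r), ‖f y - c‖ₑ ^ 2 ≤
      M * ENNReal.ofReal (1 + (k : ℝ) ^ 2) * b ^ 2 * volume (ball z (2 ^ k * r)) := by
    intro k
    have hk : 0 < 2 ^ k * r := by positivity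
    have hav := avg_dyadic hf hb z hr k
    rw [enorm_sub_rev, ← hc] at hav
    calc ∫⁻ y in ball z (2 ^ k * r), ‖f y - c‖ₑ ^ 2
        ≤ ∫⁻ y in ball z (2 ^ k * r), (2 * ‖f y - ⨍ w in ball z (2 ^ k * r), f w‖ₑ ^ 2 +
          2 * (k * (ENNReal.ofReal ((2 : ℝ) ^ (d - 1)) * b)) ^ 2) := by
          apply lintegral_mono
          intro y
          simp only []
          refine le_trans ?_ (sq_add_le _ _)
          apply pow_le_pow_left'
          have h2 : f y - c = (f y - ⨍ w in ball z (2 ^ k * r), f w) +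
              ((⨍ w in ball z (2 ^ k * r), f w) - c) := by abel
          rw [h2]
          exact (enorm_add_le _ _).trans (by gcongr)
      _ ≤ 2 * (3 * (cA d * b) ^ 2 * volume (ball z (2 ^ k * r))) +
          2 * (k * (ENNReal.ofReal ((2 : ℝ) ^ (d - 1)) * b)) ^ 2 * volume (ball z (2 ^ k * r)) := by
          rw [lintegral_add_right _ measurable_const, lintegral_const_mul' _ _ (by norm_num)]
          gcongr
          · exact john_nirenberg hf hb hb0 hbt z hk
          · simp
      _ = (6 * cA d ^ 2 * 1 + 2 * ENNReal.ofReal ((2 : ℝ) ^ (d - 1)) ^ 2 * (k : ℝ≥0∞) ^ 2) * b ^ 2 *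
          volume (ball z (2 ^ k * r)) := by ring
      _ ≤ _ := by
          have e : ENNReal.ofReal (1 + (k : ℝ) ^ 2) = 1 + (k : ℝ≥0∞) ^ 2 := by
            rw [ENNReal.ofReal_add (by norm_num) (by positivity), ENNReal.ofReal_one,
              ENNReal.ofReal_pow (by positivity), ENNReal.ofReal_natCast]
          rw [e, hM]
          gcongr
          rw [add_mul]
          gcongr
          · exact le_self_add
          · exact le_add_self
  have hfm : AEMeasurable (fun y => ‖f y - c‖ₑ ^ 2) volume :=
    ((hf.aestronglyMeasurable.sub aestronglyMeasurable_const).enorm).pow_const 2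
  calc ∫⁻ y, ENNReal.ofReal (poissonKernel d r (z - y)) * ‖f y - c‖ₑ ^ 2
      ≤ ∫⁻ y, ∑' k : ℕ, (ball z (2 ^ k * r)).indicator
        (fun y => ENNReal.ofReal (cP d * r * ((2 ^ k * r / 2) ^ d)⁻¹) * ‖f y - c‖ₑ ^ 2) y := by
        apply lintegral_mono
        intro y
        simp only []
        refine (mul_le_mul_left (pk_dyadic hd hr z y) _).trans (le_of_eq ?_)
        rw [← ENNReal.tsum_mul_right]
        congr 1; ext k
        by_cases hy : y ∈ ball z (2 ^ k * r)
        · simp only [indicator_of_mem hy]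
        · simp only [indicator_of_notMem hy, zero_mul]
    _ = ∑' k : ℕ, ENNReal.ofReal (cP d * r * ((2 ^ k * r / 2) ^ d)⁻¹) *
        ∫⁻ y in ball z (2 ^ k * r), ‖f y - c‖ₑ ^ 2 := by
        rw [lintegral_tsum]
        · congr 1; ext k
          rw [lintegral_indicator measurableSet_ball, lintegral_const_mul' _ _ ENNReal.ofReal_ne_top]
        · intro k
          exact (hfm.const_mul _).indicator measurableSet_ball
    _ ≤ ∑' k : ℕ, ENNReal.ofReal (cP d * 2 ^ d) * volume (ball (0 : E' d) 1) * M * b ^ 2 *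
        ENNReal.ofReal ((1 / 2 : ℝ) ^ k * (1 + (k : ℝ) ^ 2)) := by
        apply ENNReal.tsum_le_tsum
        intro k
        refine (mul_le_mul_right (hball k) _).trans (le_of_eq ?_)
        rw [vol_ball z (by positivity)]
        have e1 : cP d * r * ((2 ^ k * r / 2) ^ d)⁻¹ * (2 ^ k * r) ^ (d - 1) =
            cP d * 2 ^ d * (1 / 2) ^ k := by
          have h3 : (2 ^ k * r / 2) ^ d = (2 ^ k * r) ^ (d - 1) * (2 ^ k * r) / 2 ^ d := by
            rw [div_pow, ← pow_succ]; congr 2; omega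
          rw [h3]; field_simp
          rw [mul_assoc, ← mul_pow]; norm_num
        have hcP := cP_pos hd
        have e2 := congrArg ENNReal.ofReal e1
        rw [ENNReal.ofReal_mul (p := cP d * r * ((2 ^ k * r / 2) ^ d)⁻¹) (by positivity),
          ENNReal.ofReal_mul (p := cP d * 2 ^ d) (by positivity)] at e2
        rw [ENNReal.ofReal_mul (p := (1 / 2 : ℝ) ^ k) (by positivity)]
        calc _ = (ENNReal.ofReal (cP d * r * ((2 ^ k * r / 2) ^ d)⁻¹) *
              ENNReal.ofReal ((2 ^ k * r) ^ (d - 1))) * (M * ENNReal.ofReal (1 + (k : ℝ) ^ 2) * b ^ 2 *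
                volume (ball (0 : E' d) 1)) := by ring
          _ = _ := by rw [e2]; ring
    _ = Ct * b ^ 2 := by rw [ENNReal.tsum_mul_left, hCt]; ring
    _ ≤ _ := by
        rw [ENNReal.ofReal_mul (by positivity), ENNReal.ofReal_pow hB.le,
          ENNReal.ofReal_add ENNReal.toReal_nonneg zero_le_one, ENNReal.ofReal_toReal hCtt]
        gcongr
        exact le_self_add

/-- The `L¹` form of `weighted_sq`, obtained from `a ≤ B + a² / B` and the unit mass of the kernel. -/
lemma weighted_one (hd : 2 < d) : ∃ C : ℝ, 0 < C ∧ ∀ (m : ℕ) (f : E' d → Fm m) (B : ℝ), 0 < B →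
    LocallyIntegrable f volume → BmoLe f (ENNReal.ofReal B) → ∀ (z : E' d) (r : ℝ), 0 < r →
    ∫⁻ y, ENNReal.ofReal (poissonKernel d r (z - y)) * ‖f y - ⨍ w in ball z r, f w‖ₑ ≤
      ENNReal.ofReal (C * B) := by
  obtain ⟨C, hC, h⟩ := weighted_sq hd
  refine ⟨1 + C, by positivity, ?_⟩
  intro m f B hB hf hb z r hr
  set c := ⨍ w in ball z r, f w with hc
  calc ∫⁻ y, ENNReal.ofReal (poissonKernel d r (z - y)) * ‖f y - c‖ₑ
      ≤ ∫⁻ y, (ENNReal.ofReal B * ENNReal.ofReal (poissonKernel d r (z - y)) +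
        ENNReal.ofReal B⁻¹ * (ENNReal.ofReal (poissonKernel d r (z - y)) * ‖f y - c‖ₑ ^ 2)) := by
        apply lintegral_mono
        intro y
        simp only []
        rw [← ofReal_norm, ← ENNReal.ofReal_pow (norm_nonneg _),
          ← ENNReal.ofReal_mul (pk_nonneg hd hr _), ← ENNReal.ofReal_mul (pk_nonneg hd hr _),
          ← ENNReal.ofReal_mul hB.le, ← ENNReal.ofReal_mul (by positivity),
          ← ENNReal.ofReal_add (mul_nonneg hB.le (pk_nonneg hd hr _))
            (mul_nonneg (by positivity) (mul_nonneg (pk_nonneg hd hr _) (by positivity)))]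
        apply ENNReal.ofReal_le_ofReal
        have hP := pk_nonneg hd hr (z - y)
        have : ‖f y - c‖ ≤ B + B⁻¹ * ‖f y - c‖ ^ 2 := by
          have h1 : B * B⁻¹ = 1 := mul_inv_cancel₀ hB.ne'
          have h2 : 0 < B⁻¹ := by positivity
          nlinarith [sq_nonneg (‖f y - c‖ - B), norm_nonneg (f y - c), mul_nonneg h2.le (sq_nonneg (‖f y - c‖ - B))]
        nlinarith [mul_le_mul_of_nonneg_left this hP]
    _ = ENNReal.ofReal B * 1 + ENNReal.ofReal B⁻¹ *
        ∫⁻ y, ENNReal.ofReal (poissonKernel d r (z - y)) * ‖f y - c‖ₑ ^ 2 := by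
        have hPm : Measurable fun y => ENNReal.ofReal (poissonKernel d r (z - y)) :=
          ENNReal.measurable_ofReal.comp
            ((pk_continuous r hr).comp (continuous_const.sub continuous_id)).measurable
        rw [lintegral_add_left (hPm.const_mul _),
          lintegral_const_mul' _ _ ENNReal.ofReal_ne_top, lintegral_const_mul' _ _ ENNReal.ofReal_ne_top,
          pk_lintegral hd hr]
    _ ≤ ENNReal.ofReal B * 1 + ENNReal.ofReal B⁻¹ * ENNReal.ofReal (C * B ^ 2) := by
        gcongr; exact h m f B hB hf hb z r hr
    _ = _ := by
        rw [mul_one, ← ENNReal.ofReal_mul (by positivity), ← ENNReal.ofReal_add hB.le (by positivity)]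
        congr 1; field_simp

/-! ### Differentiation of Poisson integrals -/

/-- Scalar kernels on `ℝ^{d-1} × ℝ` that are smooth away from the origin and positively
homogeneous of degree `-a`. -/
def IsHom (a : ℕ) (k : E' d × ℝ → ℝ) : Prop :=
  (∀ p, p ≠ 0 → ContDiffAt ℝ ∞ k p) ∧ ∀ s : ℝ, 0 < s → ∀ p, k (s • p) = (s ^ a)⁻¹ * k p

/-- The Poisson kernel as a function on `ℝ^{d-1} × ℝ`. -/
def pkF (d : ℕ) (p : E' d × ℝ) : ℝ := poissonKernel d p.2 p.1

lemma sq_pos_of_ne {p : E' d × ℝ} (hp : p ≠ 0) : 0 < ‖p.1‖ ^ 2 + p.2 ^ 2 := by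
  by_contra h
  have h1 : ‖p.1‖ ^ 2 = 0 := by nlinarith [sq_nonneg ‖p.1‖, sq_nonneg p.2]
  have h2 : p.2 ^ 2 = 0 := by nlinarith [sq_nonneg ‖p.1‖, sq_nonneg p.2]
  apply hp
  ext1
  · simpa using h1
  · simpa using h2

lemma isHom_pkF (hd : 2 < d) : IsHom (d - 1) (pkF d) := by
  constructor
  · intro p hp
    unfold pkF poissonKernel
    refine ContDiffAt.mul (contDiffAt_const.mul contDiffAt_snd) ?_
    refine ContDiffAt.rpow_const_of_ne ?_ (sq_pos_of_ne hp).ne'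
    exact (contDiffAt_fst.norm_sq ℝ).add (contDiffAt_snd.pow 2)
  · intro s hs p
    unfold pkF poissonKernel
    simp only [Prod.smul_fst, Prod.smul_snd, smul_eq_mul]
    have h1 : ‖s • p.1‖ ^ 2 + (s * p.2) ^ 2 = s ^ 2 * (‖p.1‖ ^ 2 + p.2 ^ 2) := by
      rw [norm_smul, Real.norm_of_nonneg hs.le]; ring
    have h2 : (s ^ 2) ^ (-(d : ℝ) / 2) = (s ^ d)⁻¹ := by
      rw [← Real.rpow_natCast s 2, ← Real.rpow_mul hs.le, ← Real.rpow_natCast s d,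
        ← Real.rpow_neg hs.le]
      congr 1; push_cast; ring
    rw [h1, Real.mul_rpow (by positivity) (by positivity), h2]
    have h3 : s ^ d = s ^ (d - 1) * s := by rw [← pow_succ]; congr 1; omega
    rw [h3]; field_simp

lemma IsHom.fderiv_smul {a : ℕ} {k : E' d × ℝ → ℝ} (hk : IsHom a k) {s : ℝ} (hs : 0 < s)
    (p : E' d × ℝ) : fderiv ℝ k (s • p) = (s ^ (a + 1))⁻¹ • fderiv ℝ k p := by
  have h1 : (fun q => k (s • q)) = fun q => (s ^ a)⁻¹ • k q := by
    ext q; rw [hk.2 s hs q, smul_eq_mul]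
  have h2 := fderiv_comp_smul (𝕜 := ℝ) (f := k) (x := p) s
  rw [h1] at h2
  have h3 : fderiv ℝ (fun q => (s ^ a)⁻¹ • k q) p = (s ^ a)⁻¹ • fderiv ℝ k p := by
    have := congrFun (fderiv_const_smul_field (𝕜 := ℝ) (f := k) ((s ^ a)⁻¹)) p
    exact this
  rw [h3] at h2
  have h4 : fderiv ℝ k (s • p) = s⁻¹ • (s ^ a)⁻¹ • fderiv ℝ k p := by
    rw [h2, smul_smul, inv_mul_cancel₀ hs.ne', one_smul]
  rw [h4, smul_smul]; congr 1; rw [pow_succ, mul_inv, mul_comm]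

lemma IsHom.dir {a : ℕ} {k : E' d × ℝ → ℝ} (hk : IsHom a k) (v : E' d × ℝ) :
    IsHom (a + 1) (fun q => fderiv ℝ k q v) := by
  refine ⟨fun p hp => ?_, fun s hs p => ?_⟩
  · exact ((hk.1 p hp).fderiv_right (m := ∞) (by simp)).clm_apply contDiffAt_const
  · simp only [hk.fderiv_smul hs, smul_apply, smul_eq_mul]

/-- A continuous positively homogeneous function of degree `-(d+j)` is controlled, in the upper
half-space, by the Poisson kernel times `t^{-(j+1)}`. -/
lemma hom_bound (hd : 2 < d) {G : Type*} [NormedAddCommGroup G] [NormedSpace ℝ G] (j : ℕ)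
    (K : E' d × ℝ → G) (hc : ∀ p, p ≠ 0 → ContinuousAt K p)
    (hh : ∀ s : ℝ, 0 < s → ∀ p, K (s • p) = (s ^ (d + j))⁻¹ • K p) :
    ∃ C : ℝ, 0 < C ∧ ∀ p : E' d × ℝ, 0 < p.2 →
      ‖K p‖ ≤ C * (p.2 ^ (j + 1))⁻¹ * poissonKernel d p.2 p.1 := by
  have hcont : ContinuousOn K (sphere (0 : E' d × ℝ) 1) := by
    intro p hp
    refine (hc p ?_).continuousWithinAt
    rintro rfl
    simp at hp
  obtain ⟨M, hM⟩ := (isCompact_sphere (0 : E' d × ℝ) 1).exists_bound_of_continuousOn hcont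
  have hcP := cP_pos hd
  refine ⟨(|M| + 1) * 2 ^ d * (cP d)⁻¹, by positivity, ?_⟩
  intro p hp
  have hp0 : p ≠ 0 := by rintro rfl; simp at hp
  have hn : 0 < ‖p‖ := norm_pos_iff.2 hp0
  have h1 : K p = (‖p‖ ^ (d + j))⁻¹ • K (‖p‖⁻¹ • p) := by
    rw [← hh _ hn, smul_smul, mul_inv_cancel₀ hn.ne', one_smul]
  have h2 : ‖K (‖p‖⁻¹ • p)‖ ≤ |M| + 1 := by
    refine (hM _ ?_).trans ((le_abs_self M).trans (by linarith))
    rw [mem_sphere_zero_iff_norm, norm_smul, norm_inv, norm_norm, inv_mul_cancel₀ hn.ne']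
  have ht : p.2 ≤ ‖p‖ := (le_abs_self _).trans (norm_snd_le p)
  have hs : (‖p‖ ^ d)⁻¹ ≤ 2 ^ d * (‖p.1‖ ^ 2 + p.2 ^ 2) ^ (-(d : ℝ) / 2) := by
    have hS := sq_pos_of_ne hp0
    have hle : ‖p.1‖ ^ 2 + p.2 ^ 2 ≤ (2 * ‖p‖) ^ 2 := by
      have := norm_fst_le p
      have h3 := pow_le_pow_left₀ (norm_nonneg _) this 2
      have h4 := pow_le_pow_left₀ hp.le ht 2
      nlinarith
    have h5 : ((2 * ‖p‖) ^ 2) ^ (-(d : ℝ) / 2) = ((2 * ‖p‖) ^ d)⁻¹ := by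
      rw [← Real.rpow_natCast _ 2, ← Real.rpow_mul (by positivity), ← Real.rpow_natCast _ d,
        ← Real.rpow_neg (by positivity)]
      congr 1; push_cast; ring
    have h6 := Real.rpow_le_rpow_of_nonpos hS hle (z := -(d : ℝ) / 2) (by
      have : (0 : ℝ) ≤ d := by positivity
      linarith)
    rw [h5, mul_pow, mul_inv] at h6
    calc (‖p‖ ^ d)⁻¹ = 2 ^ d * ((2 ^ d)⁻¹ * (‖p‖ ^ d)⁻¹) := by field_simp
      _ ≤ _ := by gcongr
  have hj : (‖p‖ ^ j)⁻¹ ≤ (p.2 ^ j)⁻¹ := by gcongr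
  rw [h1, norm_smul, Real.norm_of_nonneg (by positivity), pow_add, mul_inv]
  calc (‖p‖ ^ d)⁻¹ * (‖p‖ ^ j)⁻¹ * ‖K (‖p‖⁻¹ • p)‖
      ≤ (2 ^ d * (‖p.1‖ ^ 2 + p.2 ^ 2) ^ (-(d : ℝ) / 2)) * (p.2 ^ j)⁻¹ * (|M| + 1) := by
        gcongr
    _ = _ := by unfold poissonKernel; field_simp; ring

/-- Poisson kernels at nearby points are comparable. -/
lemma pk_compare (hd : 2 < d) {x x' : E' d} {t t' : ℝ} (ht : 0 < t) (hx : ‖x' - x‖ ≤ t / 2)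
    (htt : |t' - t| ≤ t / 2) :
    poissonKernel d t' x' ≤ 2 * (6 : ℝ) ^ ((d : ℝ) / 2) * poissonKernel d t x := by
  have h1 := abs_le.1 htt
  have ht' : 0 < t' := by linarith
  have hcP := cP_pos hd
  have hS : (‖x‖ ^ 2 + t ^ 2) / 6 ≤ ‖x'‖ ^ 2 + t' ^ 2 := by
    have h2 : ‖x‖ ≤ ‖x'‖ + t / 2 := by
      have : x = x' - (x' - x) := by abel
      calc ‖x‖ = ‖x' - (x' - x)‖ := by rw [← this]
        _ ≤ ‖x'‖ + ‖x' - x‖ := norm_sub_le _ _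
        _ ≤ _ := by linarith
    have h3 := pow_le_pow_left₀ (norm_nonneg _) h2 2
    nlinarith [sq_nonneg (‖x'‖ - t / 2), norm_nonneg x']
  have h6 := Real.rpow_le_rpow_of_nonpos (by positivity) hS (z := -(d : ℝ) / 2) (by
      have : (0 : ℝ) ≤ d := by positivity
      linarith)
  rw [Real.div_rpow (by positivity) (by norm_num), neg_div, Real.rpow_neg (x := (6 : ℝ)) (by norm_num),
    div_inv_eq_mul] at h6
  unfold poissonKernel
  rw [neg_div]
  calc cP d * t' * (‖x'‖ ^ 2 + t' ^ 2) ^ (-((d : ℝ) / 2))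
      ≤ cP d * (2 * t) * ((‖x‖ ^ 2 + t ^ 2) ^ (-((d : ℝ) / 2)) * 6 ^ ((d : ℝ) / 2)) := by
        gcongr; linarith
    _ = _ := by ring

/-- The integral operator with kernel `k`. -/
def kInt (k : E' d × ℝ → ℝ) (f : E' d → Fm m) (p : E' d × ℝ) : Fm m :=
  ∫ y : E' d, k (p.1 - y, p.2) • f y

/-- Absolute convergence of all Poisson integrals of `f`. -/
def PInt (f : E' d → Fm m) : Prop := AEStronglyMeasurable f volume ∧
  ∀ (x : E' d) (t : ℝ), 0 < t → Integrable (fun y => poissonKernel d t (x - y) * ‖f y‖)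

lemma kInt_integrable {f : E' d → Fm m} (hf : PInt f) {k : E' d × ℝ → ℝ}
    (hk : ∀ p, p ≠ 0 → ContDiffAt ℝ ∞ k p) {C : ℝ} {j : ℕ}
    (hb : ∀ p : E' d × ℝ, 0 < p.2 → ‖k p‖ ≤ C * (p.2 ^ j)⁻¹ * poissonKernel d p.2 p.1)
    {p : E' d × ℝ} (hp : 0 < p.2) : Integrable (fun y => k (p.1 - y, p.2) • f y) := by
  have hcont : Continuous fun y : E' d => k (p.1 - y, p.2) := by
    rw [continuous_iff_continuousAt]
    intro y
    have h1 : ContinuousAt k (p.1 - y, p.2) := (hk _ (by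
      intro h; have := congrArg Prod.snd h; simp at this; linarith)).continuousAt
    exact ContinuousAt.comp (f := fun y : E' d => (p.1 - y, p.2)) h1 (by fun_prop)
  refine ((hf.2 p.1 p.2 hp).const_mul (C * (p.2 ^ j)⁻¹)).mono'
    (hcont.aestronglyMeasurable.smul hf.1) (Eventually.of_forall fun y => ?_)
  rw [norm_smul, ← mul_assoc]
  exact mul_le_mul_of_nonneg_right (hb (p.1 - y, p.2) hp) (norm_nonneg _)

/-- Differentiation under the integral sign for a kernel whose values and differential are dominated
by the Poisson kernel; `pk_compare` supplies a dominating function near each point. -/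
lemma kInt_hasFDerivAt (hd : 2 < d) {f : E' d → Fm m} (hf : PInt f) {k : E' d × ℝ → ℝ}
    (hk : ∀ p, p ≠ 0 → ContDiffAt ℝ ∞ k p) {C C' : ℝ} {j j' : ℕ} (hC' : 0 ≤ C')
    (hb : ∀ p : E' d × ℝ, 0 < p.2 → ‖k p‖ ≤ C * (p.2 ^ j)⁻¹ * poissonKernel d p.2 p.1)
    (hb' : ∀ p : E' d × ℝ, 0 < p.2 →
      ‖fderiv ℝ k p‖ ≤ C' * (p.2 ^ j')⁻¹ * poissonKernel d p.2 p.1)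
    {p : E' d × ℝ} (hp : 0 < p.2) :
    DifferentiableAt ℝ (kInt k f) p ∧
      ∀ v, fderiv ℝ (kInt k f) p v = kInt (fun q => fderiv ℝ k q v) f p := by
  have hne : ∀ (q : E' d × ℝ) (y : E' d), 0 < q.2 → ((q.1 - y, q.2) : E' d × ℝ) ≠ 0 := by
    intro q y hq h
    have := congrArg Prod.snd h; simp at this; linarith
  have hcont : ∀ q : E' d × ℝ, 0 < q.2 → Continuous fun y : E' d => k (q.1 - y, q.2) := by
    intro q hq
    rw [continuous_iff_continuousAt]
    intro y
    exact ContinuousAt.comp (f := fun y : E' d => (q.1 - y, q.2)) (hk _ (hne q y hq)).continuousAt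
      (by fun_prop)
  have hcont' : Continuous fun y : E' d => fderiv ℝ k (p.1 - y, p.2) := by
    rw [continuous_iff_continuousAt]
    intro y
    exact ContinuousAt.comp (f := fun y : E' d => (p.1 - y, p.2))
      ((hk _ (hne p y hp)).fderiv_right (m := ∞) (by simp)).continuousAt (by fun_prop)
  have hnear : ∀ q ∈ ball p (p.2 / 2), ‖q.1 - p.1‖ ≤ p.2 / 2 ∧ |q.2 - p.2| ≤ p.2 / 2 := by
    intro q hq
    rw [mem_ball, dist_eq_norm] at hq
    exact ⟨(norm_fst_le (q - p)).trans hq.le, (norm_snd_le (q - p)).trans hq.le⟩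
  have hF'meas : AEStronglyMeasurable
      (fun y : E' d => (fderiv ℝ k (p.1 - y, p.2)).smulRight (f y)) volume :=
    (ContinuousLinearMap.smulRightL ℝ (E' d × ℝ) (Fm m)).aestronglyMeasurable_comp₂
      hcont'.aestronglyMeasurable hf.1
  have key := hasFDerivAt_integral_of_dominated_of_fderiv_le
    (F := fun (q : E' d × ℝ) (y : E' d) => k (q.1 - y, q.2) • f y)
    (F' := fun (q : E' d × ℝ) (y : E' d) => (fderiv ℝ k (q.1 - y, q.2)).smulRight (f y))
    (x₀ := p) (s := ball p (p.2 / 2)) (μ := volume)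
    (bound := fun y => C' * ((p.2 / 2) ^ j')⁻¹ * (2 * (6 : ℝ) ^ ((d : ℝ) / 2)) *
      (poissonKernel d p.2 (p.1 - y) * ‖f y‖))
    (ball_mem_nhds _ (by positivity))
    (by
      filter_upwards [ball_mem_nhds p (show 0 < p.2 / 2 by positivity)] with q hq
      have h := abs_le.1 (hnear q hq).2
      exact (hcont q (by linarith)).aestronglyMeasurable.smul hf.1)
    (kInt_integrable hf hk hb hp) hF'meas
    (by
      refine Eventually.of_forall fun y q hq => ?_
      have h := abs_le.1 (hnear q hq).2
      have hq0 : 0 < q.2 := by linarith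
      rw [ContinuousLinearMap.norm_smulRight_apply, ← mul_assoc]
      refine mul_le_mul_of_nonneg_right ?_ (norm_nonneg _)
      refine (hb' (q.1 - y, q.2) hq0).trans ?_
      rw [mul_assoc (C' * ((p.2 / 2) ^ j')⁻¹)]
      have hP := pk_nonneg hd hq0 (q.1 - y)
      have hc := pk_compare hd hp (x := p.1 - y) (x' := q.1 - y) (t' := q.2)
        (by simpa using (hnear q hq).1) (hnear q hq).2
      simp only []
      gcongr
      linarith)
    ((hf.2 p.1 p.2 hp).const_mul _)
    (by
      refine Eventually.of_forall fun y q hq => ?_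
      have h := abs_le.1 (hnear q hq).2
      have hq0 : 0 < q.2 := by linarith
      have h1 : HasFDerivAt k (fderiv ℝ k (q.1 - y, q.2)) (q - (y, 0)) := by
        have e : q - (y, 0) = (q.1 - y, q.2) := by ext1 <;> simp
        rw [e]
        exact ((hk _ (hne q y hq0)).differentiableAt (by simp)).hasFDerivAt
      have h2 : HasFDerivAt (fun q : E' d × ℝ => k (q.1 - y, q.2)) (fderiv ℝ k (q.1 - y, q.2)) q := by
        have h3 := h1.comp q ((hasFDerivAt_id q).sub_const ((y, 0) : E' d × ℝ))
        have e2 : (fun q : E' d × ℝ => k (q.1 - y, q.2)) = k ∘ fun x => id x - ((y, 0) : E' d × ℝ) := by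
          ext x; simp only [Function.comp, id]; congr 1; ext1 <;> simp
        rw [e2]
        simpa using h3
      exact h2.smul_const (f y))
  refine ⟨key.differentiableAt, fun v => ?_⟩
  have h1 : HasFDerivAt (kInt k f) _ p := key
  rw [h1.fderiv]
  have hint : Integrable (fun y : E' d => (fderiv ℝ k (p.1 - y, p.2)).smulRight (f y)) := by
    refine ((hf.2 p.1 p.2 hp).const_mul (C' * (p.2 ^ j')⁻¹)).mono' hF'meas
      (Eventually.of_forall fun y => ?_)
    rw [ContinuousLinearMap.norm_smulRight_apply, ← mul_assoc]
    exact mul_le_mul_of_nonneg_right (hb' (p.1 - y, p.2) hp) (norm_nonneg _)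
  rw [ContinuousLinearMap.integral_apply hint]
  rfl

lemma isOpen_upper : IsOpen {p : E' d × ℝ | 0 < p.2} :=
  isOpen_lt continuous_const continuous_snd

lemma contDiffOn_step {u : E' d × ℝ → Fm m} {N : ℕ}
    (h : ∀ p : E' d × ℝ, 0 < p.2 → DifferentiableAt ℝ u p)
    (hder : ∀ v, ContDiffOn ℝ N (fun p => fderiv ℝ u p v) {p : E' d × ℝ | 0 < p.2}) :
    ContDiffOn ℝ (N + 1) u {p : E' d × ℝ | 0 < p.2} := by
  rw [contDiffOn_succ_iff_fderiv_of_isOpen isOpen_upper]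
  refine ⟨fun p hp => (h p hp).differentiableWithinAt, by simp, ?_⟩
  exact contDiffOn_clm_apply.2 hder

/-- Differentiation under the integral sign for a homogeneous kernel of degree `-(d+j)`. -/
lemma hom_kInt (hd : 2 < d) {f : E' d → Fm m} (hf : PInt f) {k : E' d × ℝ → ℝ} {j : ℕ}
    (hk : IsHom (d + j) k) {p : E' d × ℝ} (hp : 0 < p.2) :
    DifferentiableAt ℝ (kInt k f) p ∧
      ∀ v, fderiv ℝ (kInt k f) p v = kInt (fun q => fderiv ℝ k q v) f p := by
  obtain ⟨C, hC, hb⟩ := hom_bound hd j k (fun p hp => (hk.1 p hp).continuousAt)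
    (fun s hs p => by rw [hk.2 s hs p, smul_eq_mul])
  obtain ⟨C', hC', hb'⟩ := hom_bound hd (j + 1) (fderiv ℝ k)
    (fun p hp => ((hk.1 p hp).fderiv_right (m := ∞) (by simp)).continuousAt)
    (fun s hs p => hk.fderiv_smul hs p)
  exact kInt_hasFDerivAt hd hf hk.1 hC'.le hb hb' hp

lemma hom_contDiffOn (hd : 2 < d) {f : E' d → Fm m} (hf : PInt f) {k : E' d × ℝ → ℝ} {j : ℕ}
    (hk : IsHom (d + j) k) (N : ℕ) : ContDiffOn ℝ N (kInt k f) {p : E' d × ℝ | 0 < p.2} := by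
  induction N generalizing k j with
  | zero =>
    exact contDiffOn_zero.2 fun p hp => (hom_kInt hd hf hk hp).1.continuousAt.continuousWithinAt
  | succ N ih =>
    refine contDiffOn_step (fun p hp => (hom_kInt hd hf hk hp).1) fun v => ?_
    exact (ih (j := j + 1) (hk.dir v)).congr fun p hp => (hom_kInt hd hf hk hp).2 v

/-- The gradient of the Poisson kernel is at most `C t⁻¹` times the Poisson kernel. -/
lemma pk_grad_bound (hd : 2 < d) : ∃ C : ℝ, 0 < C ∧ ∀ p : E' d × ℝ, 0 < p.2 →
    ‖fderiv ℝ (pkF d) p‖ ≤ C * (p.2 ^ 1)⁻¹ * poissonKernel d p.2 p.1 := by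
  have h := isHom_pkF hd
  have e : d - 1 + 1 = d + 0 := by omega
  exact hom_bound hd 0 (fderiv ℝ (pkF d))
    (fun p hp => ((h.1 p hp).fderiv_right (m := ∞) (by simp)).continuousAt)
    (fun s hs p => by rw [h.fderiv_smul hs p, e])

lemma pk_dir_hom (hd : 2 < d) (v : E' d × ℝ) : IsHom (d + 0) (fun q => fderiv ℝ (pkF d) q v) := by
  have h := (isHom_pkF hd).dir v
  have e : d - 1 + 1 = d + 0 := by omega
  rwa [e] at h

lemma pk_bound (hd : 2 < d) (p : E' d × ℝ) (hp : 0 < p.2) :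
    ‖pkF d p‖ ≤ 1 * (p.2 ^ 0)⁻¹ * poissonKernel d p.2 p.1 := by
  change ‖poissonKernel d p.2 p.1‖ ≤ _
  rw [Real.norm_of_nonneg (pk_nonneg hd hp _)]; simp

lemma pk_kInt (hd : 2 < d) {f : E' d → Fm m} (hf : PInt f) {p : E' d × ℝ} (hp : 0 < p.2) :
    DifferentiableAt ℝ (poissonExt d m f) p ∧
      ∀ v, fderiv ℝ (poissonExt d m f) p v = kInt (fun q => fderiv ℝ (pkF d) q v) f p := by
  obtain ⟨C, hC, hb⟩ := pk_grad_bound hd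
  exact kInt_hasFDerivAt hd hf (isHom_pkF hd).1 hC.le (pk_bound hd) hb hp

lemma poissonExt_contDiffOn (hd : 2 < d) {f : E' d → Fm m} (hf : PInt f) :
    ContDiffOn ℝ 2 (poissonExt d m f) {p : E' d × ℝ | 0 < p.2} := by
  have := contDiffOn_step (N := 1) (fun p hp => (pk_kInt hd hf hp).1) fun v =>
    (hom_contDiffOn hd hf (pk_dir_hom hd v) 1).congr fun p hp => (pk_kInt hd hf hp).2 v
  exact_mod_cast this

/-! ### Harmonicity -/

/-- Second derivative of the Poisson kernel in the direction `v`, computed along `h ↦ p + h • v`. -/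
lemma pk_second (hd : 2 < d) {p : E' d × ℝ} (hp : 0 < p.2) (v : E' d × ℝ) :
    fderiv ℝ (fun q => fderiv ℝ (pkF d) q v) p v =
      cP d * (2 * v.2 * ((-(d : ℝ) / 2) * (‖p.1‖ ^ 2 + p.2 ^ 2) ^ (-(d : ℝ) / 2 - 1) *
          (2 * inner ℝ p.1 v.1 + 2 * p.2 * v.2))
        + p.2 * ((-(d : ℝ) / 2) * (-(d : ℝ) / 2 - 1) *
          (‖p.1‖ ^ 2 + p.2 ^ 2) ^ (-(d : ℝ) / 2 - 1 - 1) *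
          (2 * inner ℝ p.1 v.1 + 2 * p.2 * v.2) ^ 2)
        + p.2 * ((-(d : ℝ) / 2) * (‖p.1‖ ^ 2 + p.2 ^ 2) ^ (-(d : ℝ) / 2 - 1) *
          (2 * (‖v.1‖ ^ 2 + v.2 ^ 2)))) := by
  have hp0 : p ≠ 0 := by rintro rfl; simp at hp
  set α : ℝ := -(d : ℝ) / 2 with hα
  set s := ‖p.1‖ ^ 2 + p.2 ^ 2 with hs
  set a := 2 * inner ℝ p.1 v.1 + 2 * p.2 * v.2 with ha
  set b := ‖v.1‖ ^ 2 + v.2 ^ 2 with hb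
  have hs0 : 0 < s := sq_pos_of_ne hp0
  have hline : ∀ h : ℝ, HasDerivAt (fun h : ℝ => p + h • v) v h := fun h => by
    simpa using ((hasDerivAt_id h).smul_const v).const_add p
  have hQ : ∀ h : ℝ, ‖(p + h • v).1‖ ^ 2 + (p + h • v).2 ^ 2 = s + h * a + h ^ 2 * b := by
    intro h
    have : ‖p.1 + h • v.1‖ ^ 2 = ‖p.1‖ ^ 2 + 2 * (h * inner ℝ p.1 v.1) + (h * ‖v.1‖) ^ 2 := by
      rw [norm_add_sq_real, inner_smul_right, norm_smul, mul_pow, mul_pow, Real.norm_eq_abs, sq_abs]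
    simp only [Prod.fst_add, Prod.snd_add, Prod.smul_fst, Prod.smul_snd, smul_eq_mul, this, hs, ha,
      hb]
    ring
  have hev : ∀ᶠ h in 𝓝 (0 : ℝ), 0 < s + h * a + h ^ 2 * b := by
    have : ContinuousAt (fun h : ℝ => s + h * a + h ^ 2 * b) 0 := by fun_prop
    exact this.eventually (lt_mem_nhds (by simpa using hs0))
  have hQd : ∀ h : ℝ, HasDerivAt (fun h : ℝ => s + h * a + h ^ 2 * b) (a + 2 * h * b) h := by
    intro h
    have h1 := (((hasDerivAt_id h).mul_const a).const_add s).add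
      (((hasDerivAt_id h).pow 2).mul_const b)
    refine h1.congr_deriv ?_
    simp
  have hl : ∀ h : ℝ, HasDerivAt (fun h : ℝ => p.2 + h * v.2) v.2 h := by
    intro h
    simpa using ((hasDerivAt_id h).mul_const v.2).const_add p.2
  have hfirst : ∀ h : ℝ, 0 < s + h * a + h ^ 2 * b → fderiv ℝ (pkF d) (p + h • v) v =
      cP d * (v.2 * (s + h * a + h ^ 2 * b) ^ α +
        (p.2 + h * v.2) * ((a + 2 * h * b) * α * (s + h * a + h ^ 2 * b) ^ (α - 1))) := by
    intro h hh
    have hne : p + h • v ≠ 0 := by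
      intro h0
      have := hQ h
      rw [h0] at this
      simp at this
      linarith
    have h1 : HasDerivAt (fun h => pkF d (p + h • v)) (fderiv ℝ (pkF d) (p + h • v) v) h :=
      HasFDerivAt.comp_hasDerivAt (f := fun h : ℝ => p + h • v) h
        (((isHom_pkF hd).1 _ hne).differentiableAt (by simp)).hasFDerivAt (hline h)
    have h2 : HasDerivAt (fun h => pkF d (p + h • v)) (cP d * (v.2 *
        (s + h * a + h ^ 2 * b) ^ α +
        (p.2 + h * v.2) * ((a + 2 * h * b) * α * (s + h * a + h ^ 2 * b) ^ (α - 1)))) h := by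
      have e : (fun h => pkF d (p + h • v)) =
          fun h => cP d * ((p.2 + h * v.2) * (s + h * a + h ^ 2 * b) ^ α) := by
        ext h
        unfold pkF poissonKernel
        rw [hQ h]
        simp only [Prod.snd_add, Prod.smul_snd, smul_eq_mul]
        ring
      rw [e]
      exact ((hl h).mul ((hQd h).rpow_const (p := α) (Or.inl hh.ne'))).const_mul (cP d)
    rw [h1.unique h2]
  have hL : HasDerivAt (fun h : ℝ => fderiv ℝ (pkF d) (p + h • v) v)
      (fderiv ℝ (fun q => fderiv ℝ (pkF d) q v) p v) 0 := by
    have hdiff := (((isHom_pkF hd).dir v).1 p hp0).differentiableAt (by simp)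
    have h1 : HasFDerivAt (fun q => fderiv ℝ (pkF d) q v)
      (fderiv ℝ (fun q => fderiv ℝ (pkF d) q v) p) (p + (0 : ℝ) • v) := by
      rw [zero_smul, add_zero]; exact hdiff.hasFDerivAt
    exact h1.comp_hasDerivAt 0 (hline 0)
  have hs0' : s + 0 * a + 0 ^ 2 * b ≠ 0 := by simpa using hs0.ne'
  have hab : HasDerivAt (fun h : ℝ => a + 2 * h * b) (2 * b) 0 := by
    simpa using (((hasDerivAt_id (0 : ℝ)).const_mul 2).mul_const b).const_add a
  have hR := ((((hQd 0).rpow_const (p := α) (Or.inl hs0')).const_mul v.2).add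
    ((hl 0).mul ((hab.mul_const α).mul ((hQd 0).rpow_const (p := α - 1) (Or.inl hs0'))))).const_mul
      (cP d)
  rw [hL.unique (hR.congr_of_eventuallyEq (by filter_upwards [hev] with h hh using hfirst h hh))]
  simp only [Pi.mul_apply, zero_mul, mul_zero, add_zero, zero_pow two_ne_zero]
  clear_value α s a b
  rw [mul_eq_mul_left_iff]
  left
  ring

/-- The `i`-th horizontal unit vector of `ℝ^{d-1} × ℝ`. -/
def eH (i : Fin (d - 1)) : E' d × ℝ := (EuclideanSpace.single i 1, 0)

/-- The vertical unit vector. -/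
def eV : E' d × ℝ := (0, 1)

/-- The Poisson kernel is harmonic in the upper half-space. -/
lemma pk_laplace (hd : 2 < d) {p : E' d × ℝ} (hp : 0 < p.2) :
    ∑ i, fderiv ℝ (fun q => fderiv ℝ (pkF d) q (eH i)) p (eH i) +
      fderiv ℝ (fun q => fderiv ℝ (pkF d) q eV) p eV = 0 := by
  have hp0 : p ≠ 0 := by rintro rfl; simp at hp
  have hs := sq_pos_of_ne hp0
  simp only [pk_second hd hp]
  have hn : ‖p.1‖ ^ 2 = ∑ i, (p.1 i) ^ 2 := EuclideanSpace.real_norm_sq_eq _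
  have hi : ∀ i, inner ℝ p.1 (EuclideanSpace.single i (1 : ℝ)) = p.1 i := by
    intro i; simp [EuclideanSpace.inner_single_right]
  simp only [eH, eV, hi]
  have hpow : (‖p.1‖ ^ 2 + p.2 ^ 2) ^ (-(d : ℝ) / 2 - 1) =
      (‖p.1‖ ^ 2 + p.2 ^ 2) ^ (-(d : ℝ) / 2 - 1 - 1) * (‖p.1‖ ^ 2 + p.2 ^ 2) := by
    rw [Real.rpow_sub_one hs.ne' (-(d : ℝ) / 2 - 1)]
    field_simp
  rw [hpow]
  set K := (‖p.1‖ ^ 2 + p.2 ^ 2) ^ (-(d : ℝ) / 2 - 1 - 1)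
  have hcard : ((d - 1 : ℕ) : ℝ) = d - 1 := by
    rw [Nat.cast_sub (by omega)]; simp
  have e : ∀ i : Fin (d - 1), cP d * (2 * (0 : ℝ) * (-(d : ℝ) / 2 * (K * (‖p.1‖ ^ 2 + p.2 ^ 2)) *
      (2 * p.1 i + 2 * p.2 * 0)) + p.2 * (-(d : ℝ) / 2 * (-(d : ℝ) / 2 - 1) * K *
      (2 * p.1 i + 2 * p.2 * 0) ^ 2) + p.2 * (-(d : ℝ) / 2 * (K * (‖p.1‖ ^ 2 + p.2 ^ 2)) *
      (2 * (‖EuclideanSpace.single i (1 : ℝ)‖ ^ 2 + 0 ^ 2)))) =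
      (cP d * p.2 * (-(d : ℝ) / 2 * (-(d : ℝ) / 2 - 1) * K * 4)) * (p.1 i) ^ 2 +
      cP d * p.2 * (-(d : ℝ) * (K * (‖p.1‖ ^ 2 + p.2 ^ 2))) := by
    intro i
    have : ‖EuclideanSpace.single i (1 : ℝ)‖ = 1 := by simp
    rw [this]; ring
  rw [Finset.sum_congr rfl fun i _ => e i, Finset.sum_add_distrib, ← Finset.mul_sum, ← hn]
  simp only [Finset.sum_const, Finset.card_univ, Fintype.card_fin, nsmul_eq_mul, hcard,
    inner_zero_right, norm_zero]
  ring

/-- The Poisson extension is harmonic in the upper half-space. -/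
lemma poissonExt_laplace (hd : 2 < d) {f : E' d → Fm m} (hf : PInt f) {p : E' d × ℝ}
    (hp : 0 < p.2) :
    ∑ i, fderiv ℝ (fun q => fderiv ℝ (poissonExt d m f) q (eH i)) p (eH i) +
      fderiv ℝ (fun q => fderiv ℝ (poissonExt d m f) q eV) p eV = 0 := by
  have h2 : ∀ v : E' d × ℝ, fderiv ℝ (fun q => fderiv ℝ (poissonExt d m f) q v) p v =
      kInt (fun q => fderiv ℝ (fun q => fderiv ℝ (pkF d) q v) q v) f p := by
    intro v
    have : (fun q => fderiv ℝ (poissonExt d m f) q v) =ᶠ[𝓝 p]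
        kInt (fun q => fderiv ℝ (pkF d) q v) f := by
      filter_upwards [isOpen_upper.mem_nhds hp] with q hq using (pk_kInt hd hf hq).2 v
    rw [this.fderiv_eq]
    exact (hom_kInt hd hf (pk_dir_hom hd v) hp).2 v
  have hint : ∀ v : E' d × ℝ, Integrable (fun y =>
      fderiv ℝ (fun q => fderiv ℝ (pkF d) q v) (p.1 - y, p.2) v • f y) := by
    intro v
    have hk : IsHom (d + 1) (fun q => fderiv ℝ (fun q => fderiv ℝ (pkF d) q v) q v) :=
      (pk_dir_hom hd v).dir v
    obtain ⟨C, hC, hb⟩ := hom_bound hd 1 _ (fun p hp => (hk.1 p hp).continuousAt)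
      (fun s hs p => hk.2 s hs p)
    exact kInt_integrable hf hk.1 hb hp
  simp only [h2, kInt]
  rw [← integral_finsetSum _ fun i _ => hint (eH i), ← integral_add
    (integrable_finsetSum _ fun i _ => hint (eH i)) (hint eV)]
  rw [integral_eq_zero_of_ae]
  refine Eventually.of_forall fun y => ?_
  simp only [← Finset.sum_smul, ← add_smul]
  rw [pk_laplace hd (p := (p.1 - y, p.2)) hp]
  simp

/-! ### The gradient bound and Jensen's inequality -/

lemma enorm_pk (hd : 2 < d) {t : ℝ} (ht : 0 < t) (z : E' d) :
    ‖poissonKernel d t z‖ₑ = ENNReal.ofReal (poissonKernel d t z) :=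
  Real.enorm_of_nonneg (pk_nonneg hd ht z)

/-- `BMO` data have absolutely convergent Poisson integrals. -/
lemma pInt_of_bmo (hd : 2 < d) {f : E' d → Fm m} {B : ℝ} (hB : 0 < B)
    (hf : LocallyIntegrable f volume) (hb : BmoLe f (ENNReal.ofReal B)) : PInt f := by
  obtain ⟨C, hC, hw⟩ := weighted_one hd
  refine ⟨hf.aestronglyMeasurable, fun x t ht => ?_⟩
  set c := ⨍ w in ball x t, f w
  have hP : Continuous fun y : E' d => poissonKernel d t (x - y) :=
    (pk_continuous t ht).comp (by fun_prop)
  have h1 : Integrable fun y => poissonKernel d t (x - y) * ‖f y - c‖ := by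
    refine ⟨hP.aestronglyMeasurable.mul
      (hf.aestronglyMeasurable.sub aestronglyMeasurable_const).norm, ?_⟩
    refine lt_of_le_of_lt ?_ ((hw m f B hB hf hb x t ht).trans_lt ofReal_lt_top)
    refine lintegral_mono fun y => ?_
    rw [enorm_mul, enorm_pk hd ht, enorm_norm]
  have h2 := (pk_integrable hd ht x).mul_const ‖c‖
  refine (h1.add h2).mono' (hP.aestronglyMeasurable.mul hf.aestronglyMeasurable.norm)
    (Eventually.of_forall fun y => ?_)
  have hp := pk_nonneg hd ht (x - y)
  rw [norm_mul, norm_norm, Real.norm_of_nonneg hp, Pi.add_apply, ← mul_add]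
  gcongr
  simpa using norm_add_le (f y - c) c

lemma PInt.sub_const (hd : 2 < d) {f : E' d → Fm m} (hf : PInt f) (c : Fm m) :
    PInt (fun y => f y - c) := by
  refine ⟨hf.1.sub aestronglyMeasurable_const, fun x t ht => ?_⟩
  have hP : Continuous fun y : E' d => poissonKernel d t (x - y) :=
    (pk_continuous t ht).comp (by fun_prop)
  refine ((hf.2 x t ht).add ((pk_integrable hd ht x).mul_const ‖c‖)).mono'
    (hP.aestronglyMeasurable.mul (hf.1.sub aestronglyMeasurable_const).norm)
    (Eventually.of_forall fun y => ?_)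
  have hp := pk_nonneg hd ht (x - y)
  rw [norm_mul, norm_norm, Real.norm_of_nonneg hp, Pi.add_apply, ← mul_add]
  gcongr
  exact norm_sub_le _ _

lemma PInt.integrable (hd : 2 < d) {f : E' d → Fm m} (hf : PInt f) (x : E' d) {t : ℝ}
    (ht : 0 < t) : Integrable fun y => poissonKernel d t (x - y) • f y := by
  have hP : Continuous fun y : E' d => poissonKernel d t (x - y) :=
    (pk_continuous t ht).comp (by fun_prop)
  refine (hf.2 x t ht).mono' (hP.aestronglyMeasurable.smul hf.1) (Eventually.of_forall fun y => ?_)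
  rw [norm_smul, Real.norm_of_nonneg (pk_nonneg hd ht _)]

/-- The Poisson extension reproduces constants. -/
lemma poissonExt_sub_const (hd : 2 < d) {f : E' d → Fm m} (hf : PInt f) (c : Fm m)
    {p : E' d × ℝ} (hp : 0 < p.2) :
    poissonExt d m (fun y => f y - c) p = poissonExt d m f p - c := by
  unfold poissonExt
  simp only [smul_sub]
  rw [integral_sub (hf.integrable hd p.1 hp) ((pk_integrable hd hp p.1).smul_const c),
    integral_smul_const, pk_integral hd hp, one_smul]

lemma fderiv_poissonExt_sub_const (hd : 2 < d) {f : E' d → Fm m} (hf : PInt f) (c : Fm m)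
    {p : E' d × ℝ} (hp : 0 < p.2) :
    fderiv ℝ (poissonExt d m (fun y => f y - c)) p = fderiv ℝ (poissonExt d m f) p := by
  have : poissonExt d m (fun y => f y - c) =ᶠ[𝓝 p] fun q => poissonExt d m f q - c := by
    filter_upwards [isOpen_upper.mem_nhds hp] with q hq using poissonExt_sub_const hd hf c hq
  rw [this.fderiv_eq, fderiv_sub_const]

/-- The weighted gradient bound `t |∇𝓗f(x,t)| ≤ C B`, for any `BMO` bound `B` of `f`. -/
lemma grad_bound (hd : 2 < d) : ∃ C : ℝ, 0 < C ∧ ∀ (m : ℕ) (f : E' d → Fm m) (B : ℝ), 0 < B →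
    LocallyIntegrable f volume → BmoLe f (ENNReal.ofReal B) → ∀ p : E' d × ℝ, 0 < p.2 →
      p.2 * ‖fderiv ℝ (poissonExt d m f) p‖ ≤ C * B := by
  obtain ⟨C, hC, hw⟩ := weighted_one hd
  obtain ⟨C1, hC1, hg⟩ := pk_grad_bound hd
  refine ⟨C1 * C, by positivity, fun m f B hB hf hb p hp => ?_⟩
  have hP := pInt_of_bmo hd hB hf hb
  set c := ⨍ w in ball p.1 p.2, f w with hc
  have key : ‖fderiv ℝ (poissonExt d m f) p‖ ≤ C1 * p.2⁻¹ * (C * B) := by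
    refine ContinuousLinearMap.opNorm_le_bound _ (by positivity) fun v => ?_
    rw [← fderiv_poissonExt_sub_const hd hP c hp, (pk_kInt hd (hP.sub_const hd c) hp).2 v, kInt]
    have h1 : ‖∫ y : E' d, fderiv ℝ (pkF d) (p.1 - y, p.2) v • (f y - c)‖ₑ ≤
        ENNReal.ofReal (C1 * p.2⁻¹ * (C * B) * ‖v‖) := by
      refine (enorm_integral_le_lintegral_enorm _).trans ?_
      calc ∫⁻ y : E' d, ‖fderiv ℝ (pkF d) (p.1 - y, p.2) v • (f y - c)‖ₑ
          ≤ ∫⁻ y : E' d, ENNReal.ofReal (C1 * p.2⁻¹ * ‖v‖) *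
              (ENNReal.ofReal (poissonKernel d p.2 (p.1 - y)) * ‖f y - c‖ₑ) := by
            refine lintegral_mono fun y => ?_
            rw [enorm_smul, ← mul_assoc, ← ENNReal.ofReal_mul (by positivity)]
            gcongr
            rw [← ofReal_norm]
            refine ENNReal.ofReal_le_ofReal ?_
            refine (ContinuousLinearMap.le_opNorm _ _).trans ?_
            have h2 := hg (p.1 - y, p.2) hp
            simp only [pow_one] at h2
            calc _ ≤ (C1 * p.2⁻¹ * poissonKernel d p.2 (p.1 - y)) * ‖v‖ := by gcongr
              _ = _ := by ring
        _ = ENNReal.ofReal (C1 * p.2⁻¹ * ‖v‖) * ∫⁻ y : E' d,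
              (ENNReal.ofReal (poissonKernel d p.2 (p.1 - y)) * ‖f y - c‖ₑ) :=
            lintegral_const_mul' _ _ ofReal_ne_top
        _ ≤ ENNReal.ofReal (C1 * p.2⁻¹ * ‖v‖) * ENNReal.ofReal (C * B) := by
            gcongr
            exact hw m f B hB hf hb p.1 p.2 hp
        _ = _ := by
            rw [← ENNReal.ofReal_mul (by positivity)]; congr 1; ring
    rw [← ofReal_norm] at h1
    exact (ENNReal.ofReal_le_ofReal_iff (by positivity)).1 h1
  calc p.2 * ‖fderiv ℝ (poissonExt d m f) p‖ ≤ p.2 * (C1 * p.2⁻¹ * (C * B)) := by gcongr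
    _ = _ := by field_simp

/-- Jensen's inequality for the probability density `P_t(x - ·)`. -/
lemma jensen (hd : 2 < d) {f : E' d → Fm m} (hf : PInt f) (c : Fm m) (x : E' d) {t : ℝ}
    (ht : 0 < t) : ‖poissonExt d m f (x, t) - c‖ₑ ^ 2 ≤
      ∫⁻ y, ENNReal.ofReal (poissonKernel d t (x - y)) * ‖f y - c‖ₑ ^ 2 := by
  rw [← poissonExt_sub_const hd hf c (p := (x, t)) ht]
  have hP : Continuous fun y : E' d => poissonKernel d t (x - y) :=
    (pk_continuous t ht).comp (by fun_prop)
  have hPm : AEMeasurable (fun y : E' d => ENNReal.ofReal (poissonKernel d t (x - y))) :=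
    hP.measurable.ennreal_ofReal.aemeasurable
  set g := fun y : E' d => (ENNReal.ofReal (poissonKernel d t (x - y))) with hg
  have hfm : AEMeasurable (fun y => ‖f y - c‖ₑ) := (hf.1.sub aestronglyMeasurable_const).enorm
  have h1 : ‖poissonExt d m (fun y => f y - c) (x, t)‖ₑ ≤
      ∫⁻ y, (g y) ^ (1 / 2 : ℝ) * ((g y) ^ (1 / 2 : ℝ) * ‖f y - c‖ₑ) := by
    refine (enorm_integral_le_lintegral_enorm _).trans (lintegral_mono fun y => ?_)
    simp only
    rw [enorm_smul, enorm_pk hd ht, ← mul_assoc, ← ENNReal.rpow_add_of_nonneg _ _ (by norm_num)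
      (by norm_num)]
    norm_num [hg]
  have h2 := ENNReal.lintegral_mul_le_Lp_mul_Lq volume Real.HolderConjugate.two_two
    (hPm.pow_const (1 / 2 : ℝ)) ((hPm.pow_const (1 / 2 : ℝ)).mul hfm)
  simp only [Pi.mul_apply] at h2
  have e1 : ∀ a : ℝ≥0∞, (a ^ (1 / 2 : ℝ)) ^ (2 : ℝ) = a := fun a => by
    rw [← ENNReal.rpow_mul]; norm_num
  simp only [ENNReal.mul_rpow_of_nonneg _ _ (show (0 : ℝ) ≤ 2 by norm_num), e1] at h2
  rw [show ∫⁻ y, g y = 1 from pk_lintegral hd ht x, ENNReal.one_rpow, one_mul] at h2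
  have h3 := pow_le_pow_left' (h1.trans h2) 2
  rwa [← ENNReal.rpow_natCast (_ ^ (1 / 2 : ℝ)), ← ENNReal.rpow_mul,
    show (1 / 2 : ℝ) * ((2 : ℕ) : ℝ) = 1 by norm_num, ENNReal.rpow_one,
    show (fun y => g y * ‖f y - c‖ₑ ^ (2 : ℝ)) = fun y => g y * ‖f y - c‖ₑ ^ 2 by
      ext y; rw [← ENNReal.rpow_natCast]; norm_num] at h3

/-! ### `L²` bounds on horizontal slices -/

lemma pk_ge (hd : 2 < d) {ρ R : ℝ} (hρ : 0 < ρ) {z : E' d} (hz : ‖z‖ ≤ R) (hR : ρ ≤ R) :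
    cP d * ρ * ((2 * R) ^ d)⁻¹ ≤ poissonKernel d ρ z := by
  have := cP_pos hd
  have hR0 : 0 < R := hρ.trans_le hR
  unfold poissonKernel
  gcongr
  have h5 : ((2 * R) ^ 2) ^ (-(d : ℝ) / 2) = ((2 * R) ^ d)⁻¹ := by
    rw [← Real.rpow_natCast _ 2, ← Real.rpow_mul (by positivity), ← Real.rpow_natCast _ d,
      ← Real.rpow_neg (by positivity)]
    congr 1; push_cast; ring
  rw [← h5]
  refine Real.rpow_le_rpow_of_nonpos (by positivity) ?_ (by
    have : (0 : ℝ) ≤ d := by positivity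
    linarith)
  have h3 := pow_le_pow_left₀ (norm_nonneg _) hz 2
  have h4 := pow_le_pow_left₀ hρ.le hR 2
  nlinarith

/-- The mass that `P_t(· - y)` puts on a ball of radius `ρ ≥ t` is controlled by `P_ρ`. -/
lemma pk_mass (hd : 2 < d) : ∃ C : ℝ, 0 < C ∧ ∀ (z y : E' d) (t ρ : ℝ), 0 < t → t ≤ ρ →
    ∫⁻ x in ball z ρ, ENNReal.ofReal (poissonKernel d t (x - y)) ≤
      ENNReal.ofReal (C * ρ ^ (d - 1)) * ENNReal.ofReal (poissonKernel d ρ (z - y)) := by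
  have hcP := cP_pos hd
  set V := (volume (ball (0 : E' d) 1)).toReal with hV
  refine ⟨4 ^ d * V + 4 ^ d * (cP d)⁻¹, by positivity, fun z y t ρ ht htρ => ?_⟩
  have hρ : 0 < ρ := ht.trans_le htρ
  have hpow : ρ ^ d = ρ ^ (d - 1) * ρ := by rw [← pow_succ]; congr 1; omega
  rw [← ENNReal.ofReal_mul (by positivity)]
  rcases lt_or_ge ‖z - y‖ (2 * ρ) with h | h
  · have h1 : ∫⁻ x in ball z ρ, ENNReal.ofReal (poissonKernel d t (x - y)) ≤ 1 := by
      refine (setLIntegral_le_lintegral _ _).trans ?_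
      rw [← pk_lintegral hd ht y]
      refine lintegral_mono fun x => ?_
      unfold poissonKernel
      rw [norm_sub_rev]
    refine h1.trans ?_
    rw [← ENNReal.ofReal_one]
    refine ENNReal.ofReal_le_ofReal ?_
    have h2 := pk_ge hd hρ h.le (by linarith)
    calc (1 : ℝ) = 4 ^ d * (cP d)⁻¹ * ρ ^ (d - 1) * (cP d * ρ * ((2 * (2 * ρ)) ^ d)⁻¹) := by
          rw [show 2 * (2 * ρ) = 4 * ρ by ring, mul_pow, hpow]; field_simp
      _ ≤ (4 ^ d * V + 4 ^ d * (cP d)⁻¹) * ρ ^ (d - 1) * poissonKernel d ρ (z - y) := by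
          gcongr
          have : 0 ≤ 4 ^ d * V := by positivity
          linarith
  · have ha : 0 < ‖z - y‖ := by linarith
    have h2 := pk_ge hd hρ (z := z - y) le_rfl (by linarith)
    have h1 : ∀ x ∈ ball z ρ, poissonKernel d t (x - y) ≤ 4 ^ d * poissonKernel d ρ (z - y) := by
      intro x hx
      rw [mem_ball, dist_eq_norm] at hx
      have h3 : ‖z - y‖ / 2 ≤ ‖x - y‖ := by
        have : z - y = (x - y) - (x - z) := by abel
        have h4 : ‖z - y‖ ≤ ‖x - y‖ + ‖x - z‖ := by
          rw [this]; exact norm_sub_le _ _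
        linarith
      calc poissonKernel d t (x - y) ≤ cP d * t * ((‖z - y‖ / 2) ^ d)⁻¹ :=
            pk_le hd ht (by positivity) (Or.inl h3)
        _ ≤ cP d * ρ * ((‖z - y‖ / 2) ^ d)⁻¹ := by gcongr
        _ = 4 ^ d * (cP d * ρ * ((2 * ‖z - y‖) ^ d)⁻¹) := by
            rw [div_pow, mul_pow, show (4 : ℝ) = 2 * 2 by norm_num, mul_pow]; field_simp
        _ ≤ _ := by gcongr
    calc ∫⁻ x in ball z ρ, ENNReal.ofReal (poissonKernel d t (x - y))
        ≤ ∫⁻ x in ball z ρ, ENNReal.ofReal (4 ^ d * poissonKernel d ρ (z - y)) :=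
          setLIntegral_mono' measurableSet_ball fun x hx => ENNReal.ofReal_le_ofReal (h1 x hx)
      _ = ENNReal.ofReal (4 ^ d * poissonKernel d ρ (z - y)) *
            (ENNReal.ofReal (ρ ^ (d - 1)) * ENNReal.ofReal V) := by
          rw [setLIntegral_const]
          have := vol_scale z (0 : E' d) (r := 1) (a := ρ) one_pos hρ
          rw [mul_one] at this
          rw [this, hV, ENNReal.ofReal_toReal (vol_ball_fin _ _)]
      _ ≤ _ := by
          have hP := pk_nonneg hd hρ (z - y)
          rw [← ENNReal.ofReal_mul (by positivity), ← ENNReal.ofReal_mul (by positivity)]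
          refine ENNReal.ofReal_le_ofReal ?_
          calc 4 ^ d * poissonKernel d ρ (z - y) * (ρ ^ (d - 1) * V)
              = (4 ^ d * V) * ρ ^ (d - 1) * poissonKernel d ρ (z - y) := by ring
            _ ≤ _ := by
              gcongr
              have : 0 ≤ 4 ^ d * (cP d)⁻¹ := by positivity
              linarith

lemma tonelli_le {X Y : Type*} [MeasurableSpace X] [MeasurableSpace Y] {μ : Measure X}
    {ν : Measure Y} [SFinite μ] [SFinite ν] {K : X → Y → ℝ≥0∞} {g b : Y → ℝ≥0∞}
    (hK : Measurable (Function.uncurry K)) (hg : AEMeasurable g ν)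
    (hb : ∀ y, ∫⁻ x, K x y ∂μ ≤ b y) :
    ∫⁻ x, ∫⁻ y, K x y * g y ∂ν ∂μ ≤ ∫⁻ y, b y * g y ∂ν := by
  rw [lintegral_lintegral_swap (hK.aemeasurable.mul hg.comp_snd)]
  refine lintegral_mono fun y => ?_
  have hy : Measurable fun x => K x y := hK.comp (measurable_id.prodMk measurable_const)
  rw [lintegral_mul_const _ hy]
  exact mul_le_mul_left (hb y) _

/-- Uniform `L²` bound, over horizontal slices, for the oscillation of the Poisson extension. -/
lemma slice_bound (hd : 2 < d) : ∃ C : ℝ, 0 < C ∧ ∀ (m : ℕ) (f : E' d → Fm m) (B : ℝ), 0 < B →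
    LocallyIntegrable f volume → BmoLe f (ENNReal.ofReal B) → ∀ (z : E' d) (t ρ : ℝ),
    0 < t → t ≤ ρ →
    ∫⁻ x in ball z ρ, ‖poissonExt d m f (x, t) - ⨍ w in ball z ρ, f w‖ₑ ^ 2 ≤
      ENNReal.ofReal (C * B ^ 2 * ρ ^ (d - 1)) := by
  obtain ⟨C, hC, hw⟩ := weighted_sq hd
  obtain ⟨C1, hC1, hm⟩ := pk_mass hd
  refine ⟨C1 * C, by positivity, fun m f B hB hf hb z t ρ ht htρ => ?_⟩
  have hP := pInt_of_bmo hd hB hf hb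
  have hρ : 0 < ρ := ht.trans_le htρ
  set c := ⨍ w in ball z ρ, f w with hc
  have hK : Measurable (Function.uncurry fun x y : E' d =>
      ENNReal.ofReal (poissonKernel d t (x - y))) :=
    ((pk_continuous t ht).comp (by fun_prop : Continuous fun q : E' d × E' d => q.1 - q.2)
      ).measurable.ennreal_ofReal
  have hfm : AEMeasurable (fun y => ‖f y - c‖ₑ ^ 2) :=
    (hP.1.sub aestronglyMeasurable_const).enorm.pow_const 2
  have hT := tonelli_le (μ := volume.restrict (ball z ρ)) (ν := volume) hK hfm
    (fun y => hm z y t ρ ht htρ)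
  calc ∫⁻ x in ball z ρ, ‖poissonExt d m f (x, t) - c‖ₑ ^ 2
      ≤ ∫⁻ x in ball z ρ, ∫⁻ y, ENNReal.ofReal (poissonKernel d t (x - y)) * ‖f y - c‖ₑ ^ 2 :=
        lintegral_mono fun x => jensen hd hP c x ht
    _ ≤ ∫⁻ y, ENNReal.ofReal (C1 * ρ ^ (d - 1)) * ENNReal.ofReal (poissonKernel d ρ (z - y)) *
          ‖f y - c‖ₑ ^ 2 := hT
    _ = ENNReal.ofReal (C1 * ρ ^ (d - 1)) *
          ∫⁻ y, ENNReal.ofReal (poissonKernel d ρ (z - y)) * ‖f y - c‖ₑ ^ 2 :=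
        by simp_rw [mul_assoc]; exact lintegral_const_mul' _ _ ofReal_ne_top
    _ ≤ ENNReal.ofReal (C1 * ρ ^ (d - 1)) * ENNReal.ofReal (C * B ^ 2) := by
        exact mul_le_mul_right (hw m f B hB hf hb z ρ hρ) _
    _ = _ := by rw [← ENNReal.ofReal_mul (by positivity)]; congr 1; ring

/-! ### Cutoffs and integration by parts -/

/-- Pure second directional derivative `∂_v∂_v g`. -/
def dd {V W : Type*} [NormedAddCommGroup V] [NormedSpace ℝ V] [NormedAddCommGroup W]
    [NormedSpace ℝ W] (g : V → W) (v x : V) : W := fderiv ℝ (fun y => fderiv ℝ g y v) x v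

/-- Laplacian in the horizontal variable only. -/
def lapH (g : E' d → ℝ) (x : E' d) : ℝ := ∑ i, dd g (EuclideanSpace.single i 1) x

lemma dd_smooth {V W : Type*} [NormedAddCommGroup V] [NormedSpace ℝ V] [NormedAddCommGroup W]
    [NormedSpace ℝ W] {g : V → W} (hg : ContDiff ℝ 2 g) (v : V) :
    ContDiff ℝ 1 (fun y => fderiv ℝ g y v) ∧ Continuous (dd g v) := by
  have h1 : ContDiff ℝ 1 (fun y => fderiv ℝ g y v) :=
    (hg.fderiv_right (m := 1) (by norm_num)).clm_apply contDiff_const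
  exact ⟨h1, (h1.continuous_fderiv (by simp)).clm_apply continuous_const⟩

lemma dd_comp_affine {V : Type*} [NormedAddCommGroup V] [NormedSpace ℝ V] {g : V → ℝ}
    (hg : ContDiff ℝ 2 g) (a : ℝ) (z v x : V) :
    dd (fun x => g (a • (x - z))) v x = a ^ 2 * dd g v (a • (x - z)) := by
  have hA : ∀ x : V, HasFDerivAt (fun x => a • (x - z)) (a • ContinuousLinearMap.id ℝ V) x :=
    fun x => ((hasFDerivAt_id x).sub_const z).const_smul a
  have h : ∀ (G : V → ℝ), Differentiable ℝ G → ∀ x, fderiv ℝ (fun x => G (a • (x - z))) x v =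
      a * fderiv ℝ G (a • (x - z)) v := by
    intro G hG x
    have h1 := (hG (a • (x - z))).hasFDerivAt.comp x (hA x)
    have h2 : HasFDerivAt (fun x => G (a • (x - z))) _ x := h1
    rw [h2.fderiv]; simp
  unfold dd
  simp only [h g (hg.differentiable (by simp))]
  have h3 := (dd_smooth hg v).1.differentiable (by simp)
  have h4 : DifferentiableAt ℝ (fun y => fderiv ℝ g (a • (y - z)) v) x :=
    DifferentiableAt.comp (f := fun x : V => a • (x - z)) x (h3 (a • (x - z)))
      (hA x).differentiableAt
  rw [fderiv_const_mul h4, smul_apply, h _ h3, smul_eq_mul]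
  ring

/-- Smooth cutoffs between concentric balls of radii `r` and `2r`. -/
lemma exists_cutoff (d : ℕ) : ∃ M : ℝ, 0 < M ∧ ∀ (z : E' d) (r : ℝ), 0 < r →
    ∃ χ : E' d → ℝ, ContDiff ℝ 2 χ ∧ (∀ x, x ∉ closedBall z (2 * r) → χ x = 0) ∧
      (∀ x ∈ ball z r, χ x = 1) ∧ (∀ x, 0 ≤ χ x ∧ χ x ≤ 1) ∧
      (∀ x, x ∉ closedBall z (2 * r) → lapH χ x = 0) ∧ ∀ x, |lapH χ x| ≤ M * (r ^ 2)⁻¹ := by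
  let χ0 : ContDiffBump (0 : E' d) := ⟨1, 2, one_pos, one_lt_two⟩
  have hs : ContDiff ℝ 2 χ0 := χ0.contDiff
  have hzero : ∀ (g : E' d → ℝ) (z : E' d) (R : ℝ), (∀ x, x ∉ closedBall z R → g x = 0) →
      ∀ x, x ∉ closedBall z R → lapH g x = 0 := by
    intro g z R hg x hx
    have hev : g =ᶠ[𝓝 x] fun _ => 0 := by
      filter_upwards [isClosed_closedBall.isOpen_compl.mem_nhds hx] with y hy using hg y hy
    refine Finset.sum_eq_zero fun i _ => ?_
    have h1 : (fun y => fderiv ℝ g y (EuclideanSpace.single i 1)) =ᶠ[𝓝 x] fun _ => 0 := by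
      filter_upwards [hev.fderiv (𝕜 := ℝ)] with y hy
      rw [hy]; simp
    unfold dd
    rw [h1.fderiv_eq]; simp
  have hχ0 : ∀ x, x ∉ closedBall (0 : E' d) 2 → χ0 x = 0 := by
    intro x hx
    refine χ0.zero_of_le_dist ?_
    rw [mem_closedBall, not_le] at hx
    exact hx.le
  have hcont : Continuous (lapH χ0) := continuous_finsetSum _ fun i _ => (dd_smooth hs _).2
  obtain ⟨M, hM⟩ := (HasCompactSupport.intro (isCompact_closedBall (0 : E' d) 2)
    (hzero _ _ _ hχ0)).exists_bound_of_continuous hcont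
  refine ⟨|M| + 1, by positivity, fun z r hr => ?_⟩
  have hmem : ∀ x : E' d, x ∉ closedBall z (2 * r) → r⁻¹ • (x - z) ∉ closedBall (0 : E' d) 2 := by
    intro x hx
    rw [mem_closedBall, not_le, dist_eq_norm] at hx
    rw [mem_closedBall, not_le, dist_zero_right, norm_smul, norm_inv, Real.norm_of_nonneg hr.le,
      lt_inv_mul_iff₀ hr]
    linarith
  have hz : ∀ x, x ∉ closedBall z (2 * r) → χ0 (r⁻¹ • (x - z)) = 0 := fun x hx =>
    hχ0 _ (hmem x hx)
  refine ⟨fun x => χ0 (r⁻¹ • (x - z)), hs.comp (by fun_prop), hz, ?_,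
    fun x => ⟨χ0.nonneg, χ0.le_one⟩, hzero _ _ _ hz, fun x => ?_⟩
  · intro x hx
    refine χ0.one_of_mem_closedBall ?_
    rw [mem_ball, dist_eq_norm] at hx
    rw [mem_closedBall, dist_zero_right, norm_smul, norm_inv, Real.norm_of_nonneg hr.le,
      inv_mul_le_iff₀ hr]
    change _ ≤ r * 1
    linarith
  · have e : lapH (fun x => χ0 (r⁻¹ • (x - z))) x = (r⁻¹) ^ 2 * lapH χ0 (r⁻¹ • (x - z)) := by
      unfold lapH
      rw [Finset.mul_sum]
      exact Finset.sum_congr rfl fun i _ => dd_comp_affine hs _ _ _ _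
    rw [e, abs_mul, abs_of_nonneg (by positivity), mul_comm, inv_pow]
    gcongr
    exact (hM _).trans ((le_abs_self M).trans (by linarith))

/-- Green's identity in `ℝ^{d-1}` against a compactly supported test function. -/
lemma ibp_x {χ g : E' d → ℝ} (hχ : ContDiff ℝ 2 χ) (hc : HasCompactSupport χ)
    (hg : ContDiff ℝ 2 g) : ∫ x, χ x * lapH g x = ∫ x, lapH χ x * g x := by
  have key : ∀ v : E' d, Integrable (fun x => χ x * dd g v x) ∧
      Integrable (fun x => dd χ v x * g x) ∧ ∫ x, χ x * dd g v x = ∫ x, dd χ v x * g x := by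
    intro v
    obtain ⟨h1, h2⟩ := dd_smooth hχ v
    obtain ⟨h3, h4⟩ := dd_smooth hg v
    have c1 : HasCompactSupport fun x => fderiv ℝ χ x v := hc.fderiv_apply (𝕜 := ℝ) v
    have c2 : HasCompactSupport (dd χ v) := c1.fderiv_apply (𝕜 := ℝ) v
    have i1 : Integrable (fun x => χ x * dd g v x) :=
      (hχ.continuous.mul h4).integrable_of_hasCompactSupport hc.mul_right
    have i2 : Integrable (fun x => fderiv ℝ χ x v * fderiv ℝ g x v) :=
      (h1.continuous.mul h3.continuous).integrable_of_hasCompactSupport c1.mul_right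
    have i3 : Integrable (fun x => dd χ v x * g x) :=
      (h2.mul hg.continuous).integrable_of_hasCompactSupport c2.mul_right
    have i4 : Integrable (fun x => χ x * fderiv ℝ g x v) :=
      (hχ.continuous.mul h3.continuous).integrable_of_hasCompactSupport hc.mul_right
    have i5 : Integrable (fun x => fderiv ℝ χ x v * g x) :=
      (h1.continuous.mul hg.continuous).integrable_of_hasCompactSupport c1.mul_right
    refine ⟨i1, i3, ?_⟩
    have e1 := integral_mul_fderiv_eq_neg_fderiv_mul_of_integrable (v := v) (𝕜 := ℝ) i2 i1 i4
      (fun x _ => hχ.differentiable (by simp) x) (fun x _ => h3.differentiable (by simp) x)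
    have e2 := integral_mul_fderiv_eq_neg_fderiv_mul_of_integrable (v := v) (𝕜 := ℝ) i3 i2 i5
      (fun x _ => h1.differentiable (by simp) x) (fun x _ => hg.differentiable (by simp) x)
    calc ∫ x, χ x * dd g v x = -∫ x, fderiv ℝ χ x v * fderiv ℝ g x v := e1
      _ = ∫ x, dd χ v x * g x := by rw [e2, neg_neg]; rfl
  unfold lapH
  simp only [Finset.mul_sum, Finset.sum_mul]
  rw [integral_finsetSum _ fun i _ => (key _).1, integral_finsetSum _ fun i _ => (key _).2.1]
  exact Finset.sum_congr rfl fun i _ => (key _).2.2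

/-- One-dimensional Green identity with the weight `(t-ε)(T-t)`. -/
lemma ibp_t {g g' g'' : ℝ → ℝ} {ε T : ℝ} (hεT : ε ≤ T)
    (h1 : ∀ t ∈ Icc ε T, HasDerivAt g (g' t) t) (h2 : ∀ t ∈ Icc ε T, HasDerivAt g' (g'' t) t)
    (h3 : ContinuousOn g'' (Icc ε T)) :
    ∫ t in Ioc ε T, (t - ε) * (T - t) * g'' t =
      (T - ε) * (g T + g ε) - 2 * ∫ t in Ioc ε T, g t := by
  have hg : ContinuousOn g (Icc ε T) := fun t ht => (h1 t ht).continuousAt.continuousWithinAt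
  have hi1 : IntegrableOn (fun t => (t - ε) * (T - t) * g'' t) (Ioc ε T) := by
    refine (ContinuousOn.integrableOn_compact isCompact_Icc ?_).mono_set Ioc_subset_Icc_self
    exact ContinuousOn.mul (by fun_prop) h3
  have hi2 : IntegrableOn g (Ioc ε T) :=
    (hg.integrableOn_compact isCompact_Icc).mono_set Ioc_subset_Icc_self
  have key := intervalIntegral.integral_eq_sub_of_hasDerivAt
    (f := fun t => (t - ε) * (T - t) * g' t - (T + ε - 2 * t) * g t)
    (f' := fun t => (t - ε) * (T - t) * g'' t + 2 * g t) (a := ε) (b := T)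
    (by
      intro t ht
      rw [uIcc_of_le hεT] at ht
      have a1 : HasDerivAt (fun t : ℝ => (t - ε) * (T - t)) (1 * (T - t) + (t - ε) * (-1)) t :=
        ((hasDerivAt_id t).sub_const ε).mul ((hasDerivAt_id t).const_sub T)
      have a2 : HasDerivAt (fun t : ℝ => T + ε - 2 * t) (-(2 * 1)) t :=
        ((hasDerivAt_id t).const_mul 2).const_sub (T + ε)
      refine ((a1.mul (h2 t ht)).sub (a2.mul (h1 t ht))).congr_deriv ?_
      ring)
    (by
      rw [intervalIntegrable_iff_integrableOn_Ioc_of_le hεT]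
      exact hi1.add (hi2.const_mul 2))
  rw [intervalIntegral.integral_of_le hεT, integral_add hi1 (hi2.const_mul 2),
    integral_const_mul] at key
  linarith

/-! ### Calculus on the upper half-space -/

section calculus

variable {W : Type*} [NormedAddCommGroup W] [NormedSpace ℝ W] {g : E' d × ℝ → W}

lemma fderiv_dir_on (hg : ContDiffOn ℝ 2 g {p : E' d × ℝ | 0 < p.2}) (v : E' d × ℝ) :
    ContDiffOn ℝ 1 (fun q => fderiv ℝ g q v) {p : E' d × ℝ | 0 < p.2} :=
  (hg.fderiv_of_isOpen isOpen_upper (m := 1) (by norm_num)).clm_apply contDiffOn_const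

lemma dd_continuousOn (hg : ContDiffOn ℝ 2 g {p : E' d × ℝ | 0 < p.2}) (v : E' d × ℝ) :
    ContinuousOn (dd g v) {p : E' d × ℝ | 0 < p.2} :=
  ((fderiv_dir_on hg v).continuousOn_fderiv_of_isOpen isOpen_upper (by simp)).clm_apply
    continuousOn_const

lemma diffAt_of_on {N : ℕ∞} (hg : ContDiffOn ℝ N g {p : E' d × ℝ | 0 < p.2}) (hN : N ≠ 0)
    {p : E' d × ℝ} (hp : 0 < p.2) : DifferentiableAt ℝ g p :=
  (hg.contDiffAt (isOpen_upper.mem_nhds hp)).differentiableAt (by simpa using hN)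

lemma slice_x (x : E' d) {t : ℝ} (hg : DifferentiableAt ℝ g (x, t)) (v : E' d) :
    fderiv ℝ (fun x => g (x, t)) x v = fderiv ℝ g (x, t) (v, 0) := by
  have h1 : HasFDerivAt (fun x : E' d => (x, t)) (ContinuousLinearMap.inl ℝ (E' d) ℝ) x :=
    hasFDerivAt_prodMk_left x t
  have h2 : HasFDerivAt (fun x => g (x, t)) _ x := HasFDerivAt.comp x hg.hasFDerivAt h1
  rw [h2.fderiv]; simp

lemma slice_t (x : E' d) {t : ℝ} (hg : DifferentiableAt ℝ g (x, t)) :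
    HasDerivAt (fun t => g (x, t)) (fderiv ℝ g (x, t) eV) t := by
  have h1 : HasDerivAt (fun t : ℝ => ((x, t) : E' d × ℝ)) ((0, 1) : E' d × ℝ) t :=
    (hasDerivAt_const t x).prodMk (hasDerivAt_id t)
  exact HasFDerivAt.comp_hasDerivAt (f := fun t : ℝ => ((x, t) : E' d × ℝ)) t hg.hasFDerivAt h1

lemma slice_contDiff (hg : ContDiffOn ℝ 2 g {p : E' d × ℝ | 0 < p.2}) {t : ℝ} (ht : 0 < t) :
    ContDiff ℝ 2 fun x => g (x, t) := by
  rw [← contDiffOn_univ]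
  exact hg.comp (t := {p : E' d × ℝ | 0 < p.2}) (f := fun x : E' d => (x, t))
    (by fun_prop) fun x _ => ht

lemma slice_dd (hg : ContDiffOn ℝ 2 g {p : E' d × ℝ | 0 < p.2}) {t : ℝ} (ht : 0 < t)
    (x v : E' d) : dd (fun x => g (x, t)) v x = dd g (v, 0) (x, t) := by
  unfold dd
  have h : (fun y => fderiv ℝ (fun x => g (x, t)) y v) =
      fun y => fderiv ℝ g (y, t) (v, 0) := by
    ext1 y
    exact slice_x y (diffAt_of_on (N := 2) hg (by simp) ht) v
  rw [h]
  exact slice_x (g := fun q => fderiv ℝ g q (v, 0)) x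
    (diffAt_of_on (N := 1) (fderiv_dir_on hg (v, 0)) (by simp) ht) v

end calculus

/-- Product rule: `∂_v∂_v |w|² = 2|∂_v w|² + 2⟨w, ∂_v∂_v w⟩`. -/
lemma dd_norm_sq {w : E' d × ℝ → Fm m} (hw : ContDiffOn ℝ 2 w {p : E' d × ℝ | 0 < p.2})
    (v : E' d × ℝ) {p : E' d × ℝ} (hp : 0 < p.2) :
    dd (fun q => ‖w q‖ ^ 2) v p = 2 * ‖fderiv ℝ w p v‖ ^ 2 + 2 * inner ℝ (w p) (dd w v p) := by
  have hd : ∀ q : E' d × ℝ, 0 < q.2 → HasFDerivAt w (fderiv ℝ w q) q := fun q hq =>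
    (diffAt_of_on (N := 2) hw (by simp) hq).hasFDerivAt
  have h1 : (fun q => fderiv ℝ (fun q => ‖w q‖ ^ 2) q v) =ᶠ[𝓝 p]
      fun q => 2 * inner ℝ (w q) (fderiv ℝ w q v) := by
    filter_upwards [isOpen_upper.mem_nhds hp] with q hq
    rw [(hd q hq).norm_sq.fderiv]
    simp
  unfold dd
  rw [h1.fderiv_eq]
  have h2 := (diffAt_of_on (N := 1) (fderiv_dir_on hw v) (by simp) hp).hasFDerivAt
  have h3 := ((hd p hp).inner ℝ h2).const_mul 2
  rw [h3.fderiv]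
  simp [fderivInnerCLM_apply]
  ring

/-- For a harmonic map into Euclidean space, `Δ|w|² = 2|∇w|²`. -/
lemma laplace_norm_sq {w : E' d × ℝ → Fm m} (hw : ContDiffOn ℝ 2 w {p : E' d × ℝ | 0 < p.2})
    {p : E' d × ℝ} (hp : 0 < p.2) (hh : ∑ i, dd w (eH i) p + dd w eV p = 0) :
    ∑ i, dd (fun q => ‖w q‖ ^ 2) (eH i) p + dd (fun q => ‖w q‖ ^ 2) eV p =
      2 * gradSq d m w p := by
  simp only [dd_norm_sq hw _ hp]
  have h : ∑ i, inner ℝ (w p) (dd w (eH i) p) + inner ℝ (w p) (dd w eV p) = 0 := by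
    rw [← inner_sum, ← inner_add_right, hh, inner_zero_right]
  rw [Finset.sum_add_distrib, ← Finset.mul_sum, ← Finset.mul_sum]
  unfold gradSq
  simp only [eH, eV] at h ⊢
  linarith

/-- The operator norm of the differential is controlled by the Euclidean length of the gradient. The
operator norm refers to the sup norm on the product `ℝ^{d-1} × ℝ`; summing over the `d` basis vectors
and Cauchy–Schwarz give the factor `d`. -/
lemma fderiv_sq_le (hd : 2 < d) (w : E' d × ℝ → Fm m) (p : E' d × ℝ) :
    ‖fderiv ℝ w p‖ ^ 2 ≤ d * gradSq d m w p := by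
  have hg : 0 ≤ gradSq d m w p := by unfold gradSq; positivity
  have h : ‖fderiv ℝ w p‖ ≤ Real.sqrt (d * gradSq d m w p) := by
    refine ContinuousLinearMap.opNorm_le_bound _ (Real.sqrt_nonneg _) fun v => ?_
    have hv : v = ∑ i, v.1 i • (eH i : E' d × ℝ) + v.2 • eV := by
      ext i
      · simp [eH, eV, Prod.fst_sum, Finset.sum_apply, Pi.single_apply]
      · simp [eH, eV, Prod.snd_sum]
    have hb1 : ∀ i, |v.1 i| ≤ ‖v‖ := fun i =>
      (PiLp.norm_apply_le v.1 i).trans (norm_fst_le v)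
    have hb2 : |v.2| ≤ ‖v‖ := norm_snd_le v
    have h1 : ‖fderiv ℝ w p v‖ ≤
        (∑ i, ‖fderiv ℝ w p (eH i)‖ + ‖fderiv ℝ w p eV‖) * ‖v‖ := by
      conv_lhs => rw [hv]
      rw [map_add, map_sum, add_mul, Finset.sum_mul]
      refine (norm_add_le _ _).trans (add_le_add ((norm_sum_le _ _).trans
        (Finset.sum_le_sum fun i _ => ?_)) ?_)
      · rw [map_smul, norm_smul, mul_comm]
        exact mul_le_mul_of_nonneg_left (hb1 i) (norm_nonneg _)
      · rw [map_smul, norm_smul, mul_comm]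
        exact mul_le_mul_of_nonneg_left hb2 (norm_nonneg _)
    refine h1.trans (mul_le_mul_of_nonneg_right ?_ (norm_nonneg _))
    refine Real.le_sqrt_of_sq_le ?_
    have h2 := sq_sum_le_card_mul_sum_sq (s := (Finset.univ : Finset (Option (Fin (d - 1)))))
      (f := fun o => o.elim ‖fderiv ℝ w p eV‖ fun i => ‖fderiv ℝ w p (eH i)‖)
    simp only [Fintype.sum_option, Option.elim, Finset.card_univ, Fintype.card_option,
      Fintype.card_fin] at h2
    rw [show d - 1 + 1 = d by omega] at h2
    unfold gradSq
    simp only [eH, eV] at h2 ⊢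
    rw [add_comm, add_comm (∑ i, _ ^ 2)]
    exact h2
  have h3 := pow_le_pow_left₀ (norm_nonneg _) h 2
  rwa [Real.sq_sqrt (by positivity)] at h3

/-! ### Green's identity for `|w|²` -/

lemma integrable_slab {F : E' d × ℝ → ℝ} (hF : ContinuousOn F {p : E' d × ℝ | 0 < p.2})
    (z : E' d) (R : ℝ) {ε T : ℝ} (hε : 0 < ε) :
    Integrable F ((volume.restrict (closedBall z R)).prod (volume.restrict (Ioc ε T))) := by
  rw [Measure.prod_restrict, ← Measure.volume_eq_prod]
  have h : IntegrableOn F (closedBall z R ×ˢ Icc ε T) volume := by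
    refine (hF.mono ?_).integrableOn_compact ((isCompact_closedBall z R).prod isCompact_Icc)
    exact fun p hp => hε.trans_le hp.2.1
  exact h.mono_set (prod_mono le_rfl Ioc_subset_Icc_self)

/-- Green's identity for `|w|²` against the weight `χ(x)(t-ε)(2r-t)`: the Dirichlet energy is
controlled by the slice norms. The density `G` is `χ(x)(t-ε)(2r-t)|∇w|²`; only its nonnegativity and
its value where `χ = 1` matter. -/
lemma green_bound (d : ℕ) : ∃ C : ℝ, 0 < C ∧ ∀ (m : ℕ) (w : E' d × ℝ → Fm m),
    ContDiffOn ℝ 2 w {p : E' d × ℝ | 0 < p.2} →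
    (∀ p : E' d × ℝ, 0 < p.2 → ∑ i, dd w (eH i) p + dd w eV p = 0) →
    ∀ (z : E' d) (r A : ℝ), 0 < r →
    (∀ t, 0 < t → t ≤ 2 * r → ∫ x in closedBall z (2 * r), ‖w (x, t)‖ ^ 2 ≤ A) →
    ∀ ε, 0 < ε → ε < r → ∃ G : E' d × ℝ → ℝ,
      (∀ x ∈ closedBall z (2 * r), ∀ t ∈ Ioc ε (2 * r), 0 ≤ G (x, t)) ∧
      (∀ x ∈ ball z r, ∀ t, 0 < t → G (x, t) = (t - ε) * (2 * r - t) * gradSq d m w (x, t)) ∧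
      Integrable G ((volume.restrict (closedBall z (2 * r))).prod
        (volume.restrict (Ioc ε (2 * r)))) ∧
      ∫ q, G q ∂((volume.restrict (closedBall z (2 * r))).prod
        (volume.restrict (Ioc ε (2 * r)))) ≤ C * r * A := by
  obtain ⟨M, hM, hcut⟩ := exists_cutoff d
  refine ⟨M + 2, by positivity, fun m w hw hh z r A hr hA ε hε hεr => ?_⟩
  obtain ⟨χ, hχ, hχ0, hχ1, hχb, hl0, hlb⟩ := hcut z r hr
  have hχc : HasCompactSupport χ := HasCompactSupport.intro (isCompact_closedBall z (2 * r)) hχ0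
  set K := closedBall z (2 * r) with hK
  set T := 2 * r with hT
  have hεT : ε < T := by linarith
  set φ : E' d × ℝ → ℝ := fun q => ‖w q‖ ^ 2 with hφdef
  have hφ : ContDiffOn ℝ 2 φ {p : E' d × ℝ | 0 < p.2} := hw.norm_sq ℝ
  set μ := volume.restrict K with hμ
  set ν := volume.restrict (Ioc ε T) with hν
  set H : E' d × ℝ → ℝ := fun q => ∑ i, dd φ (eH i) q with hH
  set V : E' d × ℝ → ℝ := fun q => dd φ eV q with hV
  have hHc : ContinuousOn H {p : E' d × ℝ | 0 < p.2} :=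
    continuousOn_finsetSum _ fun i _ => dd_continuousOn hφ _
  have hVc : ContinuousOn V {p : E' d × ℝ | 0 < p.2} := dd_continuousOn hφ _
  set wt : E' d × ℝ → ℝ := fun q => χ q.1 * ((q.2 - ε) * (T - q.2)) with hwt
  have hwtc : Continuous wt := by
    have := hχ.continuous
    fun_prop
  have hF1 : Integrable (fun q => wt q * H q) (μ.prod ν) :=
    integrable_slab (hwtc.continuousOn.mul hHc) z _ hε
  have hF2 : Integrable (fun q => wt q * V q) (μ.prod ν) :=
    integrable_slab (hwtc.continuousOn.mul hVc) z _ hε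
  have hlap : ∀ q : E' d × ℝ, 0 < q.2 → H q + V q = 2 * gradSq d m w q := fun q hq =>
    laplace_norm_sq hw hq (hh q hq)
  have hφpos : ∀ q, 0 ≤ φ q := fun q => by positivity
  have hφK : ∀ t, 0 < t → Integrable (fun x => φ (x, t)) μ := fun t ht =>
    (slice_contDiff hφ ht).continuous.continuousOn.integrableOn_compact (isCompact_closedBall _ _)
  -- horizontal part
  have hx : ∀ t ∈ Ioc ε T, ‖∫ x, wt (x, t) * H (x, t) ∂μ‖ ≤ r ^ 2 * (M * (r ^ 2)⁻¹ * A) := by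
    intro t ht
    have ht0 : 0 < t := hε.trans ht.1
    have e1 : ∫ x, wt (x, t) * H (x, t) ∂μ =
        ((t - ε) * (T - t)) * ∫ x, lapH χ x * φ (x, t) ∂μ := by
      have e2 : ∫ x, χ x * lapH (fun x => φ (x, t)) x = ∫ x, lapH χ x * φ (x, t) :=
        ibp_x hχ hχc (slice_contDiff hφ ht0)
      rw [hμ, setIntegral_eq_integral_of_forall_compl_eq_zero (f := fun x => lapH χ x * φ (x, t))
        (fun x hx => by simp [hl0 x hx]), ← e2, ← integral_const_mul,
        setIntegral_eq_integral_of_forall_compl_eq_zero (fun x hx => by simp [hwt, hχ0 x hx])]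
      refine integral_congr_ae (Eventually.of_forall fun x => ?_)
      have e3 : lapH (fun x => φ (x, t)) x = H (x, t) :=
        Finset.sum_congr rfl fun i _ => slice_dd hφ ht0 x _
      simp only [e3, hwt]
      ring
    have h1 : ‖∫ x, lapH χ x * φ (x, t) ∂μ‖ ≤ M * (r ^ 2)⁻¹ * A := by
      calc ‖∫ x, lapH χ x * φ (x, t) ∂μ‖ ≤ ∫ x, M * (r ^ 2)⁻¹ * φ (x, t) ∂μ := by
            refine norm_integral_le_of_norm_le ((hφK t ht0).const_mul _)
              (Eventually.of_forall fun x => ?_)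
            rw [norm_mul, Real.norm_of_nonneg (hφpos _)]
            exact mul_le_mul_of_nonneg_right (hlb x) (hφpos _)
        _ = M * (r ^ 2)⁻¹ * ∫ x, φ (x, t) ∂μ := integral_const_mul _ _
        _ ≤ _ := mul_le_mul_of_nonneg_left (hA t ht0 ht.2) (by positivity)
    rw [e1, norm_mul]
    have h2 : ‖(t - ε) * (T - t)‖ ≤ r ^ 2 := by
      rw [Real.norm_of_nonneg (mul_nonneg (by linarith [ht.1]) (by linarith [ht.2]))]
      nlinarith [sq_nonneg (t - r), ht.1, ht.2]
    exact mul_le_mul h2 h1 (norm_nonneg _) (by positivity)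
  have hA0 : 0 ≤ A := (integral_nonneg fun x => hφpos (x, r)).trans (hA r hr (by linarith))
  have hI1 : ∫ q, wt q * H q ∂(μ.prod ν) ≤ 2 * M * r * A := by
    rw [integral_prod_symm _ hF1]
    have h := norm_setIntegral_le_of_norm_le_const (μ := volume) (s := Ioc ε T)
      (by simp) hx
    refine (le_abs_self _).trans (h.trans ?_)
    rw [Measure.real, Real.volume_Ioc, ENNReal.toReal_ofReal (by linarith)]
    calc r ^ 2 * (M * (r ^ 2)⁻¹ * A) * (T - ε) = M * A * (T - ε) := by field_simp
      _ ≤ M * A * T := by gcongr; linarith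
      _ = _ := by rw [hT]; ring
  -- vertical part
  have hv : ∀ x, ∫ t, wt (x, t) * V (x, t) ∂ν ≤ T * (φ (x, T) + φ (x, ε)) := by
    intro x
    have h1 := ibp_t (g := fun t => φ (x, t)) (g' := fun t => fderiv ℝ φ (x, t) eV)
      (g'' := fun t => V (x, t)) hεT.le
      (fun t ht => slice_t x (diffAt_of_on (N := 2) hφ (by simp) (hε.trans_le ht.1)))
      (fun t ht => slice_t (g := fun q => fderiv ℝ φ q eV) x
        (diffAt_of_on (N := 1) (fderiv_dir_on hφ eV) (by simp) (hε.trans_le ht.1)))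
      (hVc.comp (f := fun t => ((x, t) : E' d × ℝ)) (by fun_prop) fun t ht => hε.trans_le ht.1)
    have h2 : ∫ t, wt (x, t) * V (x, t) ∂ν =
        χ x * ∫ t in Ioc ε T, (t - ε) * (T - t) * V (x, t) := by
      rw [← integral_const_mul]
      refine integral_congr_ae (Eventually.of_forall fun t => ?_)
      simp only [hwt]; ring
    have h3 : 0 ≤ ∫ t in Ioc ε T, φ (x, t) := integral_nonneg fun t => hφpos _
    have h4 : 0 ≤ φ (x, T) + φ (x, ε) := add_nonneg (hφpos _) (hφpos _)
    rw [h2, h1]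
    calc χ x * ((T - ε) * (φ (x, T) + φ (x, ε)) - 2 * ∫ t in Ioc ε T, φ (x, t))
        ≤ χ x * (T * (φ (x, T) + φ (x, ε))) := by
          refine mul_le_mul_of_nonneg_left ?_ (hχb x).1
          nlinarith
      _ ≤ 1 * (T * (φ (x, T) + φ (x, ε))) :=
          mul_le_mul_of_nonneg_right (hχb x).2 (by positivity)
      _ = _ := one_mul _
  have hI2 : ∫ q, wt q * V q ∂(μ.prod ν) ≤ 4 * r * A := by
    rw [integral_prod _ hF2]
    have iT := hφK T (by linarith)
    have iε := hφK ε hε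
    calc ∫ x, ∫ t, wt (x, t) * V (x, t) ∂ν ∂μ ≤ ∫ x, T * (φ (x, T) + φ (x, ε)) ∂μ :=
          integral_mono hF2.integral_prod_left ((iT.add iε).const_mul T) hv
      _ = T * (∫ x, φ (x, T) ∂μ + ∫ x, φ (x, ε) ∂μ) := by
          rw [integral_const_mul, integral_add iT iε]
      _ ≤ T * (A + A) := by
          refine mul_le_mul_of_nonneg_left (add_le_add ?_ ?_) (by positivity)
          · exact hA T (by linarith) le_rfl
          · exact hA ε hε hεT.le
      _ = _ := by rw [hT]; ring
  have hG : ∀ x t, 0 < t → (wt (x, t) * H (x, t) + wt (x, t) * V (x, t)) / 2 =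
      wt (x, t) * gradSq d m w (x, t) := by
    intro x t ht
    rw [← mul_add, hlap (x, t) ht]; ring
  refine ⟨fun q => (wt q * H q + wt q * V q) / 2, ?_, ?_, (hF1.add hF2).div_const 2, ?_⟩
  · intro x _ t ht
    have ht0 : 0 < t := hε.trans ht.1
    have hg : 0 ≤ gradSq d m w (x, t) := by unfold gradSq; positivity
    show 0 ≤ (wt (x, t) * H (x, t) + wt (x, t) * V (x, t)) / 2
    rw [hG x t ht0]
    exact mul_nonneg (mul_nonneg (hχb x).1
      (mul_nonneg (by linarith [ht.1]) (by linarith [ht.2]))) hg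
  · intro x hx t ht
    have e : wt (x, t) = (t - ε) * (T - t) := by simp [hwt, hχ1 x hx]
    show (wt (x, t) * H (x, t) + wt (x, t) * V (x, t)) / 2 = _
    rw [hG x t ht, e]
  · rw [integral_div, integral_add hF1 hF2]
    linarith

/-! ### The Carleson bound -/

/-- The Dirichlet energy weighted by the height, on the Carleson box over `ball z r`, is bounded by
the slice norms on the doubled ball; `ε → 0` in `green_bound`. -/
lemma box_bound (hd : 2 < d) : ∃ C : ℝ, 0 < C ∧ ∀ (m : ℕ) (w : E' d × ℝ → Fm m),
    ContDiffOn ℝ 2 w {p : E' d × ℝ | 0 < p.2} →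
    (∀ p : E' d × ℝ, 0 < p.2 → ∑ i, dd w (eH i) p + dd w eV p = 0) →
    ∀ (z : E' d) (r A : ℝ), 0 < r →
    (∀ t, 0 < t → t ≤ 2 * r → ∫ x in closedBall z (2 * r), ‖w (x, t)‖ ^ 2 ≤ A) →
    ∫⁻ y in carlesonBox d (z, r), ENNReal.ofReal (y.2 * ‖fderiv ℝ w y‖ ^ 2) ≤
      ENNReal.ofReal (C * A) := by
  obtain ⟨C, hC, hg⟩ := green_bound d
  have hd0 : (0 : ℝ) < d := by exact_mod_cast (by omega : 0 < d)
  refine ⟨2 * d * C, by positivity, fun m w hw hh z r A hr hA => ?_⟩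
  have key : ∀ a, 0 < a → a < r → ∫⁻ y in ball z r ×ˢ Ioo a r,
      ENNReal.ofReal (y.2 * ‖fderiv ℝ w y‖ ^ 2) ≤ ENNReal.ofReal (2 * d * C * A) := by
    intro a ha har
    obtain ⟨G, hG0, hG, hGi, hGb⟩ := hg m w hw hh z r A hr hA (a / 2) (by linarith) (by linarith)
    have hsub : ball z r ×ˢ Ioo a r ⊆ closedBall z (2 * r) ×ˢ Ioc (a / 2) (2 * r) := by
      refine prod_mono (ball_subset_closedBall.trans (closedBall_subset_closedBall (by linarith)))
        fun t ht => ⟨by linarith [ht.1], by linarith [ht.2]⟩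
    have hae : 0 ≤ᵐ[(volume.restrict (closedBall z (2 * r))).prod
        (volume.restrict (Ioc (a / 2) (2 * r)))] G := by
      rw [Measure.prod_restrict]
      exact ae_restrict_of_forall_mem
        (measurableSet_closedBall.prod measurableSet_Ioc) fun q hq => hG0 q.1 hq.1 q.2 hq.2
    have hdr : 0 ≤ 2 * d / r := by positivity
    calc ∫⁻ y in ball z r ×ˢ Ioo a r, ENNReal.ofReal (y.2 * ‖fderiv ℝ w y‖ ^ 2)
        ≤ ∫⁻ y in ball z r ×ˢ Ioo a r, ENNReal.ofReal (2 * d / r * G y) := by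
          refine setLIntegral_mono' (measurableSet_ball.prod measurableSet_Ioo) fun y hy => ?_
          refine ENNReal.ofReal_le_ofReal ?_
          have hy1 := hy.2.1
          have hy2 := hy.2.2
          have hy0 : 0 < y.2 := ha.trans hy1
          have e : G y = (y.2 - a / 2) * (2 * r - y.2) * gradSq d m w y := hG y.1 hy.1 y.2 hy0
          have h1 : y.2 ≤ 2 / r * ((y.2 - a / 2) * (2 * r - y.2)) := by
            rw [div_mul_eq_mul_div, le_div_iff₀ hr]
            nlinarith
          have hgs : 0 ≤ gradSq d m w y := by unfold gradSq; positivity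
          calc y.2 * ‖fderiv ℝ w y‖ ^ 2 ≤ y.2 * (d * gradSq d m w y) :=
                mul_le_mul_of_nonneg_left (fderiv_sq_le hd w y) hy0.le
            _ ≤ 2 / r * ((y.2 - a / 2) * (2 * r - y.2)) * (d * gradSq d m w y) :=
                mul_le_mul_of_nonneg_right h1 (by positivity)
            _ = _ := by rw [e]; ring
      _ ≤ ∫⁻ y in closedBall z (2 * r) ×ˢ Ioc (a / 2) (2 * r), ENNReal.ofReal (2 * d / r * G y) :=
          lintegral_mono_set hsub
      _ = ENNReal.ofReal (2 * d / r * ∫ q, G q ∂((volume.restrict (closedBall z (2 * r))).prod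
            (volume.restrict (Ioc (a / 2) (2 * r))))) := by
          rw [← integral_const_mul, ofReal_integral_eq_lintegral_ofReal (hGi.const_mul _)
            (hae.mono fun q hq => mul_nonneg hdr hq), Measure.prod_restrict,
            ← Measure.volume_eq_prod]
      _ ≤ _ := by
          refine ENNReal.ofReal_le_ofReal ?_
          calc _ ≤ 2 * d / r * (C * r * A) := mul_le_mul_of_nonneg_left hGb hdr
            _ = _ := by field_simp
  -- exhaust the Carleson box from inside
  have hun : carlesonBox d (z, r) = ⋃ n : ℕ, ball z r ×ˢ Ioo (r / (n + 2)) r := by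
    ext ⟨x, t⟩
    simp only [carlesonBox, mem_iUnion, mem_prod, mem_Ioo]
    constructor
    · rintro ⟨hx, ht, htr⟩
      obtain ⟨n, hn⟩ := exists_nat_gt (r / t)
      refine ⟨n, hx, ?_, htr⟩
      rw [div_lt_iff₀ ht] at hn
      rw [div_lt_iff₀ (by positivity)]
      nlinarith
    · rintro ⟨n, hx, ht, htr⟩
      exact ⟨hx, lt_of_le_of_lt (by positivity) ht, htr⟩
  have hmono : Monotone fun n : ℕ => ball z r ×ˢ Ioo (r / ((n : ℝ) + 2)) r := by
    intro n k hnk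
    refine prod_mono le_rfl (Ioo_subset_Ioo_left ?_)
    have : (n : ℝ) ≤ k := by exact_mod_cast hnk
    gcongr
  rw [hun, setLIntegral_iUnion_of_directed _ hmono.directed_le]
  refine iSup_le fun n => key _ (by positivity) ?_
  rw [div_lt_iff₀ (by positivity)]
  have : (0 : ℝ) ≤ n := by positivity
  nlinarith

/-- The Carleson measure part of the seminorm: `box_bound` applied to `𝓗f - c`, with `c` the mean of
`f` over the doubled ball. -/
lemma carleson_bound (hd : 2 < d) : ∃ C : ℝ, 0 < C ∧ ∀ (m : ℕ) (f : E' d → Fm m) (B : ℝ), 0 < B →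
    LocallyIntegrable f volume → BmoLe f (ENNReal.ofReal B) →
    carlesonSemi d m (poissonExt d m f) ≤ ENNReal.ofReal (C * B) := by
  obtain ⟨C1, hC1, hs⟩ := slice_bound hd
  obtain ⟨C2, hC2, hbx⟩ := box_bound hd
  set C := C2 * (C1 * 2 ^ (d - 1)) with hCdef
  have hC : 0 < C := by positivity
  refine ⟨Real.sqrt C, Real.sqrt_pos.2 hC, fun m f B hB hf hb => ?_⟩
  have hP := pInt_of_bmo hd hB hf hb
  refine iSup₂_le ?_
  rintro ⟨z, r⟩ (hr : 0 < r)
  have h2r : 0 < 2 * r := by linarith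
  set c := ⨍ y in ball z (2 * r), f y with hc
  have hPc := hP.sub_const hd c
  have hcd := poissonExt_contDiffOn hd hPc
  have hsl : ∀ t, 0 < t → t ≤ 2 * r → ∫ x in closedBall z (2 * r),
      ‖poissonExt d m (fun y => f y - c) (x, t)‖ ^ 2 ≤ C1 * B ^ 2 * (2 * r) ^ (d - 1) := by
    intro t ht htr
    rw [restrict_cB z h2r, integral_eq_lintegral_of_nonneg_ae
      (Eventually.of_forall fun x => by positivity)]
    · refine ENNReal.toReal_le_of_le_ofReal (by positivity) (le_trans (le_of_eq ?_)
        (hs m f B hB hf hb z t (2 * r) ht htr))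
      refine lintegral_congr fun x => ?_
      rw [poissonExt_sub_const hd hP c (p := (x, t)) ht, ← ofReal_norm,
        ENNReal.ofReal_pow (norm_nonneg _)]
    · have := (slice_contDiff hcd ht).continuous
      exact (this.norm.pow 2).aestronglyMeasurable
  have hbox := hbx m (poissonExt d m (fun y => f y - c)) hcd
    (fun p hp => poissonExt_laplace hd hPc hp) z r _ hr hsl
  have heq : ∫⁻ y in carlesonBox d (z, r), ENNReal.ofReal (y.2 * ‖fderiv ℝ (poissonExt d m f) y‖ ^ 2)
      = ∫⁻ y in carlesonBox d (z, r),
        ENNReal.ofReal (y.2 * ‖fderiv ℝ (poissonExt d m (fun y => f y - c)) y‖ ^ 2) := by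
    refine setLIntegral_congr_fun (measurableSet_ball.prod measurableSet_Ioo) fun y hy => ?_
    simp only [fderiv_poissonExt_sub_const hd hP c (p := y) hy.2.1]
  have hrp : r ^ (1 - (d : ℝ)) * r ^ (d - 1) = 1 := by
    rw [← Real.rpow_natCast r (d - 1), ← Real.rpow_add hr, Nat.cast_sub (by omega)]
    simp
  have hrad : ENNReal.ofReal (r ^ (1 - (d : ℝ))) * ∫⁻ y in carlesonBox d (z, r),
      ENNReal.ofReal (y.2 * ‖fderiv ℝ (poissonExt d m f) y‖ ^ 2) ≤
      ENNReal.ofReal (Real.sqrt C * B) ^ (2 : ℝ) := by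
    rw [heq]
    refine (mul_le_mul_right hbox _).trans (le_of_eq ?_)
    rw [← ENNReal.ofReal_mul (by positivity), ENNReal.ofReal_rpow_of_nonneg (by positivity)
      (by norm_num)]
    congr 1
    rw [Real.rpow_two, mul_pow, mul_pow (Real.sqrt C), Real.sq_sqrt hC.le, hCdef]
    linear_combination (C2 * C1 * B ^ 2 * 2 ^ (d - 1)) * hrp
  calc _ ≤ (ENNReal.ofReal (Real.sqrt C * B) ^ (2 : ℝ)) ^ (1 / 2 : ℝ) :=
        ENNReal.rpow_le_rpow hrad (by norm_num)
    _ = _ := by rw [← ENNReal.rpow_mul]; norm_num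

theorem Xsemi_le (d m : ℕ) (hd : 2 < d) :
    ∃ C > 0, ∀ f : E' d → Fm m, LocallyIntegrable f volume → bmoSemi d m f < ⊤ →
      Xsemi d m (poissonExt d m f) ≤ ENNReal.ofReal C * bmoSemi d m f := by
  obtain ⟨C1, hC1, hg⟩ := grad_bound hd
  obtain ⟨C2, hC2, hc⟩ := carleson_bound hd
  refine ⟨C1 + C2, by positivity, fun f hf hfin => ?_⟩
  have hB : ∀ B : ℝ, 0 < B → bmoSemi d m f ≤ ENNReal.ofReal B →
      Xsemi d m (poissonExt d m f) ≤ ENNReal.ofReal (C1 + C2) * ENNReal.ofReal B := by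
    intro B hB hle
    have hb := bmoLe_of_bmoSemi hle
    rw [← ENNReal.ofReal_mul (by positivity), add_mul,
      ENNReal.ofReal_add (by positivity) (by positivity)]
    refine add_le_add (iSup₂_le fun p hp => ?_) (hc m f B hB hf hb)
    exact ENNReal.ofReal_le_ofReal (hg m f B hB hf hb p hp)
  -- `B` must be positive, so approach the seminorm from above to cover the value `0`
  have hlim : Tendsto (fun δ : ℝ => ENNReal.ofReal (C1 + C2) *
      ENNReal.ofReal ((bmoSemi d m f).toReal + δ)) (𝓝[>] 0)
      (𝓝 (ENNReal.ofReal (C1 + C2) * bmoSemi d m f)) := by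
    have h : Tendsto (fun δ : ℝ => ENNReal.ofReal ((bmoSemi d m f).toReal + δ)) (𝓝[>] 0)
        (𝓝 (bmoSemi d m f)) := by
      have h0 : Continuous fun δ : ℝ => ENNReal.ofReal ((bmoSemi d m f).toReal + δ) :=
        ENNReal.continuous_ofReal.comp (by fun_prop)
      have h1 := (h0.tendsto 0).mono_left (nhdsWithin_le_nhds (s := Ioi 0))
      simpa [ENNReal.ofReal_toReal hfin.ne] using h1
    exact ENNReal.Tendsto.const_mul h (Or.inr ENNReal.ofReal_ne_top)
  refine ge_of_tendsto hlim (eventually_mem_nhdsWithin.mono fun δ (hδ : 0 < δ) => ?_)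
  refine hB _ (by positivity) ?_
  rw [← ENNReal.ofReal_toReal hfin.ne, ENNReal.toReal_ofReal ENNReal.toReal_nonneg]
  exact ENNReal.ofReal_le_ofReal (by linarith)

end

/-- **Lemma 2.1, second part.** If `f ∈ BMO(ℝ^{d-1}, ℝ^m)`, then the Poisson extension
satisfies the seminorm bound `|𝓗f|_𝐗 ≤ C ‖f‖_{BMO}` for a constant `C > 0`
independent of `f`. -/
theorem poissonExt_Xsemi_le_of_BMO
    (d m : ℕ) (hd : 2 < d) (hm : 1 < m) :
    ∃ C > 0, ∀ f : E' d → Fm m, LocallyIntegrable f volume →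
      bmoSemi d m f < ⊤ →
      Xsemi d m (poissonExt d m f) ≤ ENNReal.ofReal C * bmoSemi d m f := by
  exact Xsemi_le d m hd

end HarmonicMapsHalfSpace
end
end

section
/- Let N be a smooth closed manifold embedded in ℝ^m. For every Λ > 0 there exists C₁ > 0 depending on Λ and N such that for every f ∈ BMO(ℝ^{d-1}) with f(x') ∈ N a.e., one has dist(v(x), N) ≤ C₁‖f‖_{BMO(ℝ^{d-1})} + Λ for every x ∈ ℝ^d_+, where v = 𝓗f is the Poisson extension of f. -/
/-! The bound is obtained by comparing `v(x)` with the mean `a` of `f` over the ball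
`B = B(x', t K)`, where `t = x_d` and `K` is a large multiple chosen in terms of `Λ` and `N` only.

Since `f` takes values in `N`, `dist(a, N) ≤ |f(y) - a|` for a.e. `y`, and averaging over `B` gives
`dist(a, N) ≤ ‖f‖_BMO`.  Since `∫ P_t = 1`, `v(x) - a = ∫ P_t(x' - y) (f(y) - a) dy`.  On `B` the
kernel is at most `c_d t^{1-d}`, and `|B| = t^{d-1} |B(0, K)|`, so this part contributes at most
`c_d |B(0, K)| ‖f‖_BMO`.  Off `B`, `|f - a|` is at most twice the bound `R` of `N`, and by scaling
`P_t` has there the mass which `P_1` has off `B(0, K)`; this is small once `K` is large, by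
integrability of `P_1`. -/

/- Setting: upper half-space ℝ^d_+ modelled as pairs (x', x_d) ∈ ℝ^{d-1} × ℝ with x_d > 0,
   target ℝ^m ⊇ N a smooth closed manifold. -/

open MeasureTheory Metric ENNReal

noncomputable section

namespace HarmonicMapsHalfSpace

/-! ### The Poisson kernel: normalization, bound, scaling and tail -/

lemma integrable_base (d : ℕ) (hd : 2 < d) :
    Integrable (fun y : E' d => (‖y‖ ^ 2 + 1) ^ (-(d : ℝ) / 2)) := by
  have h : (Module.finrank ℝ (E' d) : ℝ) < d := by
    rw [finrank_euclideanSpace_fin]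
    exact_mod_cast (by omega : d - 1 < d)
  simpa only [add_comm] using integrable_rpow_neg_one_add_norm_sq (μ := (volume : Measure (E' d))) h

lemma cP_nonneg (d : ℕ) : 0 ≤ cP d :=
  inv_nonneg.2 (integral_nonneg fun y => by positivity)

lemma integrable_poissonKernel_one (d : ℕ) (hd : 2 < d) : Integrable (poissonKernel d 1) := by
  have h := (integrable_base d hd).const_mul (cP d)
  unfold poissonKernel
  simpa using h

lemma integral_poissonKernel_one (d : ℕ) (hd : 2 < d) : ∫ y, poissonKernel d 1 y = 1 := by
  have hpos : 0 < ∫ y : E' d, (‖y‖ ^ 2 + 1) ^ (-(d : ℝ) / 2) := by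
    rw [integral_pos_iff_support_of_nonneg (fun y => by positivity) (integrable_base d hd)]
    have : Function.support (fun y : E' d => (‖y‖ ^ 2 + 1) ^ (-(d : ℝ) / 2)) = Set.univ := by
      ext y
      simp only [Function.mem_support, Set.mem_univ, iff_true]
      positivity
    rw [this]
    exact isOpen_univ.measure_pos volume Set.univ_nonempty
  have h : ∀ y : E' d, poissonKernel d 1 y = cP d * (‖y‖ ^ 2 + 1) ^ (-(d : ℝ) / 2) := by
    intro y
    simp [poissonKernel]
  simp_rw [h]
  rw [integral_const_mul, cP, inv_mul_cancel₀ hpos.ne']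

lemma poissonKernel_one_nonneg (d : ℕ) (y : E' d) : 0 ≤ poissonKernel d 1 y := by
  have := cP_nonneg d
  unfold poissonKernel
  positivity

lemma poissonKernel_one_le (d : ℕ) (y : E' d) : poissonKernel d 1 y ≤ cP d := by
  have h : (‖y‖ ^ 2 + (1 : ℝ) ^ 2) ^ (-(d : ℝ) / 2) ≤ 1 := by
    apply Real.rpow_le_one_of_one_le_of_nonpos
    · nlinarith [sq_nonneg ‖y‖]
    · have : (0 : ℝ) ≤ d := d.cast_nonneg
      linarith
  unfold poissonKernel
  rw [mul_one]
  exact mul_le_of_le_one_right (cP_nonneg d) h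

lemma poissonKernel_scaling (d : ℕ) (hd : 2 < d) {t : ℝ} (ht : 0 < t) (y : E' d) :
    poissonKernel d t y = (t ^ (d - 1))⁻¹ * poissonKernel d 1 (t⁻¹ • y) := by
  have h1 : ‖y‖ ^ 2 + t ^ 2 = t ^ 2 * (‖t⁻¹ • y‖ ^ 2 + 1 ^ 2) := by
    rw [norm_smul, Real.norm_of_nonneg (inv_nonneg.2 ht.le)]
    field_simp
  have h2 : t * (t ^ 2) ^ (-(d : ℝ) / 2) = (t ^ (d - 1))⁻¹ := by
    rw [← Real.rpow_natCast t 2, ← Real.rpow_mul ht.le, ← Real.rpow_natCast t (d - 1),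
      ← Real.rpow_neg ht.le]
    nth_rewrite 1 [← Real.rpow_one t]
    rw [← Real.rpow_add ht]
    congr 1
    push_cast [Nat.cast_sub (by omega : 1 ≤ d)]
    ring
  unfold poissonKernel
  rw [h1, Real.mul_rpow (by positivity) (by positivity), ← h2]
  ring

lemma integrable_rescale (d : ℕ) {t : ℝ} (ht : 0 < t) (x : E' d) {h : E' d → ℝ}
    (hh : Integrable h) : Integrable fun y => (t ^ (d - 1))⁻¹ * h (t⁻¹ • (x - y)) :=
  ((hh.comp_smul (inv_ne_zero ht.ne')).comp_sub_left x).const_mul _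

lemma integral_rescale (d : ℕ) {t : ℝ} (ht : 0 < t) (x : E' d) (h : E' d → ℝ) :
    ∫ y, (t ^ (d - 1))⁻¹ * h (t⁻¹ • (x - y)) = ∫ y, h y := by
  rw [integral_const_mul, integral_sub_left_eq_self (fun y => h (t⁻¹ • y)) volume x,
    Measure.integral_comp_inv_smul, finrank_euclideanSpace_fin, abs_of_pos (by positivity),
    smul_eq_mul, ← mul_assoc, inv_mul_cancel₀ (by positivity), one_mul]

lemma exists_tail_le (d : ℕ) (hd : 2 < d) {ε : ℝ} (hε : 0 < ε) :
    ∃ K > (0 : ℝ), ∫ y in (ball (0 : E' d) K)ᶜ, poissonKernel d 1 y ≤ ε := by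
  have h := tendsto_setIntegral_of_antitone (μ := (volume : Measure (E' d)))
    (f := poissonKernel d 1) (s := fun n : ℕ => (ball (0 : E' d) n)ᶜ)
    (fun n => measurableSet_ball.compl)
    (fun i j hij => Set.compl_subset_compl.2 (ball_subset_ball (by exact_mod_cast hij)))
    ⟨0, (integrable_poissonKernel_one d hd).integrableOn⟩
  have hempty : ⋂ n : ℕ, (ball (0 : E' d) n)ᶜ = ∅ := by
    rw [← Set.compl_iUnion, iUnion_ball_nat, Set.compl_univ]
  rw [hempty, setIntegral_empty] at h
  obtain ⟨n, hn, hn0⟩ := ((h.eventually_le_const hε).and (Filter.eventually_gt_atTop 0)).exists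
  exact ⟨n, by exact_mod_cast hn0, hn⟩

/-! ### Comparison with the mean over a ball -/

/-- The estimate at scale `t`, with the mean oscillation over the single ball `B(x', t K)` in place
of the `BMO` seminorm. -/
lemma infDist_le_meanOscillation (d m : ℕ) (hd : 2 < d) {N : Set (Fm m)}
    {R : ℝ} (hR : ∀ z ∈ N, ‖z‖ ≤ R) {K : ℝ} (hK : 0 < K) {f : E' d → Fm m}
    (hf : LocallyIntegrable f volume) (hfN : ∀ᵐ y' ∂(volume : Measure (E' d)), f y' ∈ N)
    (x : E' d) {t : ℝ} (ht : 0 < t) :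
    infDist (poissonExt d m f (x, t)) N ≤
      (1 + cP d * volume.real (ball (0 : E' d) K)) *
        (⨍ y in ball x (t * K), ‖f y - ⨍ w in ball x (t * K), f w‖) +
      2 * R * ∫ y in (ball (0 : E' d) K)ᶜ, poissonKernel d 1 y := by
  set B : Set (E' d) := ball x (t * K) with hB
  set a : Fm m := ⨍ w in B, f w with ha
  have hVpos : volume B ≠ 0 := (measure_ball_pos volume x (by positivity)).ne'
  have hVfin : volume B ≠ ∞ := measure_ball_lt_top.ne
  have hV : 0 < volume.real B := ENNReal.toReal_pos hVpos hVfin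
  have hVB : volume.real B = t ^ (d - 1) * volume.real (ball (0 : E' d) K) := by
    rw [Measure.real, hB, Measure.addHaar_ball_mul_of_pos volume x ht K, ENNReal.toReal_mul,
      finrank_euclideanSpace_fin, ENNReal.toReal_ofReal (by positivity), Measure.real]
  have hfB : IntegrableOn f B :=
    (hf.integrableOn_isCompact (isCompact_closedBall x (t * K))).mono_set ball_subset_closedBall
  have hfR : ∀ᵐ y, ‖f y‖ ≤ R := hfN.mono fun y hy => hR _ hy
  have haR : ‖a‖ ≤ R := by
    have := (convex_closedBall (0 : Fm m) R).set_average_mem isClosed_closedBall hVpos hVfin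
      ((ae_restrict_of_ae hfR).mono fun y hy => by simpa using hy) hfB
    simpa using this
  have hoscB : IntegrableOn (fun y => ‖f y - a‖) B :=
    (hfB.sub (integrableOn_const hVfin)).norm
  set I : ℝ := ∫ y in B, ‖f y - a‖ with hI
  have hDI : (⨍ y in B, ‖f y - a‖) = (volume.real B)⁻¹ * I := by
    rw [setAverage_eq, smul_eq_mul]
  rw [hDI]
  -- The mean is close to `N`.
  have hdist : infDist a N ≤ (volume.real B)⁻¹ * I := by
    have h1 : ∫ _ in B, infDist a N ≤ I := by
      refine setIntegral_mono_ae (integrableOn_const hVfin) hoscB ?_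
      filter_upwards [hfN] with y hy
      have := infDist_le_dist_of_mem (x := a) hy
      rwa [dist_comm, dist_eq_norm] at this
    rw [setIntegral_const, smul_eq_mul] at h1
    rw [inv_mul_eq_div, le_div_iff₀ hV, mul_comm]
    exact h1
  set h : E' d → ℝ := (ball (0 : E' d) K)ᶜ.indicator (poissonKernel d 1) with hh
  have hhint : Integrable h :=
    (integrable_poissonKernel_one d hd).indicator measurableSet_ball.compl
  have htail : ∫ y in (ball (0 : E' d) K)ᶜ, poissonKernel d 1 y = ∫ y, h y :=
    (integral_indicator measurableSet_ball.compl).symm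
  have hPint : Integrable fun y => poissonKernel d t (x - y) := by
    simp_rw [poissonKernel_scaling d hd ht]
    exact integrable_rescale d ht x (integrable_poissonKernel_one d hd)
  have hPone : ∫ y, poissonKernel d t (x - y) = 1 := by
    simp_rw [poissonKernel_scaling d hd ht]
    rw [integral_rescale d ht x (poissonKernel d 1), integral_poissonKernel_one d hd]
  have hPf : Integrable fun y => poissonKernel d t (x - y) • f y :=
    hPint.smul_bdd R hf.aestronglyMeasurable hfR
  have hdiff : poissonExt d m f (x, t) - a = ∫ y, poissonKernel d t (x - y) • (f y - a) := by
    simp_rw [smul_sub]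
    rw [integral_sub hPf (hPint.smul_const a), integral_smul_const, hPone, one_smul]
    rfl
  -- Split of the kernel into its bounded part near `x` and its tail.
  have hpt : ∀ᵐ y, ‖poissonKernel d t (x - y) • (f y - a)‖ ≤
      (t ^ (d - 1))⁻¹ * cP d * B.indicator (fun y => ‖f y - a‖) y +
        2 * R * ((t ^ (d - 1))⁻¹ * h (t⁻¹ • (x - y))) := by
    filter_upwards [hfR] with y hy
    have hP0 := poissonKernel_one_nonneg d (t⁻¹ • (x - y))
    have hfa : ‖f y - a‖ ≤ 2 * R := by linarith [norm_sub_le (f y) a]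
    have hnorm : ‖t⁻¹ • (x - y)‖ = t⁻¹ * dist y x := by
      rw [norm_smul, Real.norm_of_nonneg (inv_nonneg.2 ht.le), dist_comm, dist_eq_norm]
    have hiff : t⁻¹ • (x - y) ∈ ball (0 : E' d) K ↔ y ∈ B := by
      rw [mem_ball_zero_iff, hnorm, hB, mem_ball, inv_mul_lt_iff₀ ht]
    rw [norm_smul, poissonKernel_scaling d hd ht, Real.norm_of_nonneg (by positivity)]
    by_cases hy' : y ∈ B
    · have : h (t⁻¹ • (x - y)) = 0 :=
        Set.indicator_of_notMem (by simpa only [Set.mem_compl_iff, not_not] using hiff.2 hy') _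
      rw [this, Set.indicator_of_mem hy', mul_zero, mul_zero, add_zero]
      gcongr
      exact poissonKernel_one_le d _
    · have : h (t⁻¹ • (x - y)) = poissonKernel d 1 (t⁻¹ • (x - y)) :=
        Set.indicator_of_mem (by simpa only [Set.mem_compl_iff] using mt hiff.1 hy') _
      rw [this, Set.indicator_of_notMem hy', mul_zero, zero_add, mul_comm (2 * R)]
      gcongr
  have hi1 := ((integrable_indicator_iff measurableSet_ball).2 hoscB).const_mul
    ((t ^ (d - 1))⁻¹ * cP d)
  have hi2 := (integrable_rescale d ht x hhint).const_mul (2 * R)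
  have hva : ‖poissonExt d m f (x, t) - a‖ ≤
      cP d * volume.real (ball (0 : E' d) K) * ((volume.real B)⁻¹ * I) + 2 * R * ∫ y, h y := by
    rw [hdiff]
    refine (norm_integral_le_of_norm_le (hi1.add hi2) hpt).trans_eq ?_
    rw [integral_add' hi1 hi2, integral_const_mul, integral_const_mul, integral_rescale d ht x h,
      integral_indicator measurableSet_ball, ← hI, hVB]
    have : 0 < volume.real (ball (0 : E' d) K) :=
      ENNReal.toReal_pos (measure_ball_pos volume _ hK).ne' measure_ball_lt_top.ne
    field_simp
  have htri := infDist_le_infDist_add_dist (s := N) (x := poissonExt d m f (x, t)) (y := a)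
  rw [dist_eq_norm] at htri
  rw [htail]
  linarith

lemma ofReal_meanOscillation_le_bmoSemi (d m : ℕ) {f : E' d → Fm m}
    (hf : LocallyIntegrable f volume) (x : E' d) {r : ℝ} (hr : 0 < r) :
    ENNReal.ofReal (⨍ y in ball x r, ‖f y - ⨍ w in ball x r, f w‖) ≤ bmoSemi d m f := by
  have hVfin : volume (ball x r) ≠ ∞ := measure_ball_lt_top.ne
  have hV : 0 < volume.real (ball x r) :=
    ENNReal.toReal_pos (measure_ball_pos volume x hr).ne' hVfin
  have hfB : IntegrableOn f (ball x r) :=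
    (hf.integrableOn_isCompact (isCompact_closedBall x r)).mono_set ball_subset_closedBall
  have hosc : IntegrableOn (fun y => ‖f y - ⨍ w in ball x r, f w‖) (ball x r) :=
    (hfB.sub (integrableOn_const hVfin)).norm
  rw [setAverage_eq, smul_eq_mul, ENNReal.ofReal_mul (inv_nonneg.2 hV.le),
    ENNReal.ofReal_inv_of_pos hV, Measure.real, ENNReal.ofReal_toReal hVfin,
    ofReal_integral_eq_lintegral_ofReal hosc (ae_of_all _ fun y => norm_nonneg _)]
  exact le_iSup_of_le x (le_iSup_of_le r (le_iSup_of_le hr le_rfl))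

/-- **Proposition 2.3, second part.** For every `Λ > 0` there is `C₁ > 0` (depending on
`Λ` and `N`) such that for every `f ∈ BMO(ℝ^{d-1})` with values in `N` a.e.,
`dist(v(x), N) ≤ C₁ ‖f‖_{BMO} + Λ` for every `x ∈ ℝ^d_+`, where `v = 𝓗f`. -/
theorem dist_poissonExt_to_N_le_BMO
    (d m : ℕ) (hd : 2 < d) (hm : 1 < m)
    (N : Set (Fm m)) (hN : IsCompact N) (hNne : N.Nonempty) :
    ∀ Λ > (0 : ℝ), ∃ C₁ > 0, ∀ f : E' d → Fm m,
      LocallyIntegrable f volume →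
      (∀ᵐ y' ∂(volume : Measure (E' d)), f y' ∈ N) →
      ∀ x : E' d × ℝ, 0 < x.2 →
        ENNReal.ofReal (Metric.infDist (poissonExt d m f x) N) ≤
          ENNReal.ofReal C₁ * bmoSemi d m f + ENNReal.ofReal Λ := by
  intro Λ hΛ
  obtain ⟨R, hRpos, hR⟩ := hN.isBounded.exists_pos_norm_le
  obtain ⟨K, hK, htail⟩ := exists_tail_le d hd (ε := Λ / (2 * R)) (by positivity)
  have hc : 0 ≤ cP d * volume.real (ball (0 : E' d) K) :=
    mul_nonneg (cP_nonneg d) measureReal_nonneg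
  refine ⟨1 + cP d * volume.real (ball (0 : E' d) K), by linarith, ?_⟩
  rintro f hf hfN ⟨x, t⟩ ht
  have ht : 0 < t := ht
  have h2 : 2 * R * ∫ y in (ball (0 : E' d) K)ᶜ, poissonKernel d 1 y ≤ Λ := by
    rwa [le_div_iff₀' (by positivity)] at htail
  have h1 := infDist_le_meanOscillation d m hd hR hK hf hfN x ht
  refine (ENNReal.ofReal_le_ofReal (h1.trans (add_le_add_right h2 _))).trans ?_
  refine ENNReal.ofReal_add_le.trans ?_
  rw [ENNReal.ofReal_mul (by linarith)]
  gcongr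
  exact ofReal_meanOscillation_le_bmoSemi d m hf x (by positivity)

end HarmonicMapsHalfSpace
end
end
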